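/- arXiv:1304.1441 — 8 statements merged into one kernel-verified Lean document; each statement's English description precedes it below -/
import Mathlib

section
/- For every natural number n, the quasi-polyadic equality algebra A_n (the subalgebra of C generated by {a_i : i < 2^n}) cannot be generated by n elements: for every subset X of A_n with |X| ≤ n, the subalgebra of C generated by X is not equal to A_n. -/
/- Formalization of quasi-polyadic equality set algebras over the weak space
   `V = {s : α → ℚ | s i ≠ 0 for finitely many i}`, where the infinite ordinal α
   is formalized as an infinite type. -/

open scoped Classical

namespace QPEA

variable {α : Type*}

/-- The weak space `V = ^αℚ^(0)`: functions with finite support. -/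
def W (α : Type*) : Set (α → ℚ) := {s | {i | s i ≠ 0}.Finite}

/-- Cylindrification `c_i`. -/
def cyl (i : α) (X : Set (α → ℚ)) : Set (α → ℚ) :=
  {s | s ∈ W α ∧ ∃ t ∈ X, ∀ j, j ≠ i → t j = s j}

/-- Diagonal element `d_ij`. -/
def diag (i j : α) : Set (α → ℚ) := {s | s ∈ W α ∧ s i = s j}

/-- Transposition substitution `s_[i,j]`. -/
noncomputable def sub (i j : α) (X : Set (α → ℚ)) : Set (α → ℚ) :=
  {s | s ∈ W α ∧ (s ∘ Equiv.swap i j) ∈ X}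

/-- Membership in the subalgebra of the full quasi-polyadic equality set algebra `C`
    (with unit `V = W α`) generated by `S`. -/
inductive SgMem (S : Set (Set (α → ℚ))) : Set (α → ℚ) → Prop
  | base {x : Set (α → ℚ)} : x ∈ S → SgMem S x
  | empty : SgMem S ∅
  | top : SgMem S (W α)
  | dgnl (i j : α) : SgMem S (diag i j)
  | union {x y : Set (α → ℚ)} : SgMem S x → SgMem S y → SgMem S (x ∪ y)
  | compl {x : Set (α → ℚ)} : SgMem S x → SgMem S (W α \ x)
  | cylin (i : α) {x : Set (α → ℚ)} : SgMem S x → SgMem S (cyl i x)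
  | subst (i j : α) {x : Set (α → ℚ)} : SgMem S x → SgMem S (sub i j x)

/-- The subalgebra `Sg^C S` of `C` generated by `S`. -/
def Sg (S : Set (Set (α → ℚ))) : Set (Set (α → ℚ)) := {x | SgMem S x}

/-- The element `[t, r] = {s ∈ V | t = Σ_i r_i s_i}`. -/
noncomputable def poly (t : ℚ) (r : α → ℚ) : Set (α → ℚ) :=
  {s | s ∈ W α ∧ t = ∑ᶠ i, r i * s i}

/-- `a_m = [m, 1]` where `1` is the constantly-one sequence. -/
noncomputable def aElem (m : ℕ) : Set (α → ℚ) := poly (m : ℚ) (fun _ => 1)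

/-- `r ∈ ^αℚ^(0) ∪ ^αℚ^(1)`. -/
def weak01 (r : α → ℚ) : Prop := {i | r i ≠ 0}.Finite ∨ {i | r i ≠ 1}.Finite

/-- `Pol = {[t,r] : r ∈ ^αℚ^(0) ∪ ^αℚ^(1)}`. -/
def Pol (α : Type*) : Set (Set (α → ℚ)) :=
  {X | ∃ t r, weak01 r ∧ X = poly t r}

/-- `Po = {[t,r] ∈ Pol : 0 ∈ range r} ∪ {d_ij : i ≠ j}`. -/
def Po (α : Type*) : Set (Set (α → ℚ)) :=
  {X | ∃ t r, weak01 r ∧ (∃ i, r i = 0) ∧ X = poly t r} ∪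
    {X | ∃ i j : α, i ≠ j ∧ X = diag i j}

/-- `Pof = {[t, 1] : t ∈ ℚ}`. -/
def Pof (α : Type*) : Set (Set (α → ℚ)) := {X | ∃ t : ℚ, X = poly t (fun _ => 1)}

/-- `X^S = {s_[i,j] x : x ∈ X, i, j < α}`. -/
def sClose (X : Set (Set (α → ℚ))) : Set (Set (α → ℚ)) :=
  {y | ∃ x ∈ X, ∃ i j : α, y = sub i j x}

/-- `X*`: finite intersections of elements of `X` and complements (rel. `V`) of
    elements of `X` (the empty intersection being `V`). -/
def star (X : Set (Set (α → ℚ))) : Set (Set (α → ℚ)) :=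
  {p | ∃ (n : ℕ) (f : Fin n → Set (α → ℚ)),
      (∀ i, f i ∈ X ∨ ∃ q ∈ X, f i = W α \ q) ∧ p = W α ∩ ⋂ i, f i}

/-- `X**`: finite unions of elements of `X*` (the empty union being `∅`);
    the Boolean subalgebra of `℘(V)` generated by `X`. -/
def dstar (X : Set (Set (α → ℚ))) : Set (Set (α → ℚ)) :=
  {p | ∃ (n : ℕ) (f : Fin n → Set (α → ℚ)), (∀ i, f i ∈ star X) ∧ p = ⋃ i, f i}

/-- `G(Y) = (Y^S ∪ Po)**`. -/
def G (Y : Set (Set (α → ℚ))) : Set (Set (α → ℚ)) := dstar (sClose Y ∪ Po α)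

/-- `Poz`: elements of `G(Pol)` covered by finitely many elements of `Po`. -/
def Poz (α : Type*) : Set (Set (α → ℚ)) :=
  {x | x ∈ G (Pol α) ∧
    ∃ (n : ℕ) (p : Fin n → Set (α → ℚ)), (∀ i, p i ∈ Po α) ∧ x ⊆ ⋃ i, p i}

/-- `Neg = G(∅) ∖ Poz`. -/
def Neg (α : Type*) : Set (Set (α → ℚ)) := G (∅ : Set (Set (α → ℚ))) \ Poz α

/-- An ideal of a subalgebra `B` of `C`: a nonempty subset of `B`, downward closed
    in `B`, closed under `∪`, and closed under the operations `c_i` and `s_[i,j]`. -/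
def IsIdeal (B I : Set (Set (α → ℚ))) : Prop :=
  I.Nonempty ∧ I ⊆ B ∧
    (∀ x ∈ I, ∀ y ∈ B, y ⊆ x → y ∈ I) ∧
    (∀ x ∈ I, ∀ y ∈ I, x ∪ y ∈ I) ∧
    (∀ x ∈ I, ∀ i : α, cyl i x ∈ I) ∧
    (∀ x ∈ I, ∀ i j : α, sub i j x ∈ I)

/-- `B` is simple: every ideal of `B` equals `{∅}` or all of `B`. -/
def Simple (B : Set (Set (α → ℚ))) : Prop :=
  ∀ I : Set (Set (α → ℚ)), IsIdeal B I → I = {∅} ∨ I = B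

/-- A subuniverse of `C`: contains `∅`, `V`, all diagonals, and is closed under
    `∪`, complement relative to `V`, all `c_i` and all `s_[i,j]`. -/
def IsSubuniv (B : Set (Set (α → ℚ))) : Prop :=
  (∅ : Set (α → ℚ)) ∈ B ∧ W α ∈ B ∧ (∀ i j : α, diag i j ∈ B) ∧
    (∀ x ∈ B, ∀ y ∈ B, x ∪ y ∈ B) ∧
    (∀ x ∈ B, W α \ x ∈ B) ∧
    (∀ i : α, ∀ x ∈ B, cyl i x ∈ B) ∧
    (∀ i j : α, ∀ x ∈ B, sub i j x ∈ B)

end QPEA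

namespace QPEA

variable {α : Type*}

/-- Affine functionals on the weak space. -/
abbrev Fn (α : Type*) := ℚ × ((α →₀ ℚ) →ₗ[ℚ] ℚ)

/-- Value of an affine functional. -/
noncomputable def ev (f : Fn α) (s : α →₀ ℚ) : ℚ := f.1 + f.2 s

/-- Coefficient at `i`. -/
noncomputable def cf (f : Fn α) (i : α) : ℚ := f.2 (Finsupp.single i 1)

/-- Functionals with both a zero and a nonzero coefficient. -/
def good (f : Fn α) : Prop := (∃ i, cf f i = 0) ∧ ∃ j, cf f j ≠ 0

/-- The sum functional. -/
noncomputable def sg : (α →₀ ℚ) →ₗ[ℚ] ℚ := Finsupp.linearCombination ℚ (fun _ => (1 : ℚ))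

/-- The invariant. -/
def Inv {β : Type*} (κ : ℚ → β) (x : Set (α → ℚ)) : Prop :=
  ∃ F : Finset (Fn α), (∀ f ∈ F, good f) ∧ ∀ s s' : α →₀ ℚ,
    (∀ f ∈ F, (ev f s = 0 ↔ ev f s' = 0)) → κ (sg s) = κ (sg s') → (⇑s ∈ x ↔ ⇑s' ∈ x)

lemma mem_W (s : α →₀ ℚ) : ⇑s ∈ W α := by
  have := s.finite_support
  exact this

lemma exists_of_mem_W {s : α → ℚ} (h : s ∈ W α) : ∃ t : α →₀ ℚ, ⇑t = s :=
  ⟨Finsupp.ofSupportFinite s h, rfl⟩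

lemma sg_single (i : α) (q : ℚ) : sg (Finsupp.single i q) = q := by
  simp [sg]

lemma mem_aElem (m : ℕ) (s : α →₀ ℚ) : ⇑s ∈ (aElem m : Set (α → ℚ)) ↔ sg s = m := by
  have h : ∑ᶠ i, (1:ℚ) * s i = sg s := by
    rw [finsum_eq_sum_of_support_subset (s := s.support)]
    · simp [sg, Finsupp.linearCombination_apply, Finsupp.sum]
    · intro i hi
      simpa using hi
  constructor
  · rintro ⟨_, h2⟩
    rw [h] at h2
    exact h2.symm
  · intro h2
    exact ⟨mem_W s, by rw [h, h2]⟩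

lemma lin_single (L : (α →₀ ℚ) →ₗ[ℚ] ℚ) (i : α) (q : ℚ) :
    L (Finsupp.single i q) = q * L (Finsupp.single i 1) := by
  rw [← smul_eq_mul, ← map_smul]
  simp

lemma ev_add_single (f : Fn α) (s : α →₀ ℚ) (i : α) (q : ℚ) :
    ev f (s + Finsupp.single i q) = ev f s + q * cf f i := by
  simp only [ev, cf, map_add]
  rw [lin_single]; ring

lemma const_of_cf (f : Fn α) (h : ∀ j, cf f j = 0) (s : α →₀ ℚ) : ev f s = f.1 := by
  have : f.2 = 0 := by
    apply Finsupp.lhom_ext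
    intro a b
    rw [lin_single]
    have := h a
    unfold cf at this
    simp [this]
  simp [ev, this]

lemma exists_avoid (F : Finset (ℚ × ℚ)) (h : ∀ p ∈ F, p.1 ≠ 0 ∨ p.2 ≠ 0) :
    ∃ q : ℚ, ∀ p ∈ F, p.1 + q * p.2 ≠ 0 := by
  obtain ⟨q, hq⟩ := Infinite.exists_notMem_finset (F.image (fun p => - p.1 / p.2))
  refine ⟨q, fun p hp h0 => ?_⟩
  by_cases h2 : p.2 = 0
  · rcases h p hp with h1 | h1
    · apply h1; simpa [h2] using h0
    · exact h1 h2
  · apply hq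
    rw [Finset.mem_image]
    refine ⟨p, hp, ?_⟩
    field_simp
    linarith

/-- generic points -/
lemma exists_generic [Nonempty α] (m : ℚ) (F : Finset (Fn α)) (hF : ∀ f ∈ F, good f) :
    ∃ s : α →₀ ℚ, sg s = m ∧ ∀ f ∈ F, ev f s ≠ 0 := by
  induction F using Finset.induction_on with
  | empty =>
    obtain ⟨i⟩ := ‹Nonempty α›
    exact ⟨Finsupp.single i m, sg_single _ _, by simp⟩
  | insert f F hf ih =>
    obtain ⟨s, hs, hsF⟩ := ih (fun g hg => hF g (Finset.mem_insert_of_mem hg))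
    obtain ⟨⟨i, hi⟩, ⟨j, hj⟩⟩ := hF f (Finset.mem_insert_self _ _)
    obtain ⟨q, hq⟩ := exists_avoid ((insert f F).image (fun g => (ev g s, cf g j - cf g i))) (by
      intro p hp
      rw [Finset.mem_image] at hp
      obtain ⟨g, hg, rfl⟩ := hp
      rcases Finset.mem_insert.1 hg with rfl | hg
      · right; simpa [hi] using hj
      · left; exact hsF g hg)
    refine ⟨s + Finsupp.single j q + Finsupp.single i (-q), ?_, ?_⟩
    · simp [map_add, sg_single, hs]
    · intro g hg
      have := hq _ (Finset.mem_image_of_mem _ hg)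
      rw [ev_add_single, ev_add_single]
      intro h0; apply this
      simp only
      linarith

/-- elimination -/
noncomputable def elm (i : α) (f g : Fn α) : Fn α := cf f i • g - cf g i • f

lemma ev_elm (i : α) (f g : Fn α) (s : α →₀ ℚ) :
    ev (elm i f g) s = cf f i * ev g s - cf g i * ev f s := by
  simp [ev, elm]; ring

lemma cf_elm (i j : α) (f g : Fn α) :
    cf (elm i f g) j = cf f i * cf g j - cf g i * cf f j := by
  simp [cf, elm]

lemma ev_eq_off {i : α} (h : Fn α) (hi : cf h i = 0) (s t : α →₀ ℚ)
    (hst : ∀ j, j ≠ i → t j = s j) : ev h t = ev h s := by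
  have : t = s + Finsupp.single i (t i - s i) := by
    ext j
    by_cases hj : j = i
    · subst hj; simp
    · simp [hst j hj, Finsupp.single_apply, Ne.symm hj]
  rw [this, ev_add_single, hi]; ring

lemma cyl_step (i : α) (F : Finset (Fn α)) (s s' t : α →₀ ℚ)
    (hst : ∀ j, j ≠ i → t j = s j)
    (h1 : ∀ f ∈ F, cf f i = 0 → (ev f s = 0 ↔ ev f s' = 0))
    (h2 : ∀ f ∈ F, ∀ g ∈ F, (ev (elm i f g) s = 0 ↔ ev (elm i f g) s' = 0)) :
    ∃ t' : α →₀ ℚ, (∀ j, j ≠ i → t' j = s' j) ∧ ∀ f ∈ F, (ev f t = 0 ↔ ev f t' = 0) := by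
  have off : ∀ q : ℚ, ∀ j, j ≠ i → (s' + Finsupp.single i q) j = s' j := by
    intro q j hj
    simp [Finsupp.single_apply, Ne.symm hj]
  by_cases hc : ∃ f ∈ F, cf f i ≠ 0 ∧ ev f t = 0
  · obtain ⟨f, hf, hfi, hft⟩ := hc
    refine ⟨s' + Finsupp.single i (- ev f s' / cf f i), off _, ?_⟩
    set t' := s' + Finsupp.single i (- ev f s' / cf f i) with ht'
    have hft' : ev f t' = 0 := by
      rw [ht', ev_add_single]; field_simp; ring
    intro g hg
    have e0 : cf (elm i f g) i = 0 := by rw [cf_elm]; ring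
    have e1 := ev_eq_off (elm i f g) e0 s t hst
    have e2 := ev_eq_off (elm i f g) e0 s' t' (off _)
    have e3 := h2 f hf g hg
    rw [← e1, ← e2, ev_elm, ev_elm, hft, hft'] at e3
    simpa [hfi] using e3
  · push Not at hc
    obtain ⟨q, hq⟩ := exists_avoid
      ((F.filter (fun f => cf f i ≠ 0)).image (fun g => (ev g s', cf g i))) (by
      intro p hp
      rw [Finset.mem_image] at hp
      obtain ⟨g, hg, rfl⟩ := hp
      right; exact (Finset.mem_filter.1 hg).2)
    refine ⟨s' + Finsupp.single i q, off q, ?_⟩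
    intro g hg
    by_cases hgi : cf g i = 0
    · rw [ev_eq_off g hgi s t hst, ev_eq_off g hgi s' _ (off q)]
      exact h1 g hg hgi
    · have a1 := hc g hg hgi
      have a2 := hq _ (Finset.mem_image_of_mem _ (Finset.mem_filter.2 ⟨hg, hgi⟩))
      rw [ev_add_single]
      exact ⟨fun h => absurd h a1, fun h => absurd h a2⟩

/-- the functional `sum - m` -/
noncomputable def hyp (m : ℕ) : Fn α := (-(m : ℚ), sg)

lemma ev_hyp (m : ℕ) (s : α →₀ ℚ) : ev (hyp m) s = 0 ↔ sg s = m := by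
  simp only [ev, hyp]
  constructor <;> intro h <;> linarith

lemma cf_hyp (m : ℕ) (i : α) : cf (hyp m) i = 1 := by
  simp [cf, hyp, sg_single]

lemma inv_cyl {β : Type*} (κ : ℚ → β) (N : ℕ)
    (hκ : ∀ q q' : ℚ, (∀ m : ℕ, m < N → (q = m ↔ q' = m)) → κ q = κ q')
    (i : α) (x : Set (α → ℚ)) (hx : Inv κ x) : Inv κ (cyl i x) := by
  obtain ⟨F, hF, hx⟩ := hx
  let F1 : Finset (Fn α) := F ∪ (Finset.range N).image hyp
  let F2 : Finset (Fn α) := (F1 ∪ (F1 ×ˢ F1).image (fun p => elm i p.1 p.2)).filter good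
  have key : ∀ s s' : α →₀ ℚ, (∀ f ∈ F2, (ev f s = 0 ↔ ev f s' = 0)) →
      ⇑s ∈ cyl i x → ⇑s' ∈ cyl i x := by
    rintro s s' hss ⟨_, t, htx, hts⟩
    have hall : ∀ h ∈ F1 ∪ (F1 ×ˢ F1).image (fun p => elm i p.1 p.2), cf h i = 0 →
        (ev h s = 0 ↔ ev h s' = 0) := by
      intro h hh hi
      by_cases hc : ∃ j, cf h j ≠ 0
      · exact hss h (Finset.mem_filter.2 ⟨hh, ⟨i, hi⟩, hc⟩)
      · push Not at hc
        rw [const_of_cf h hc, const_of_cf h hc]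
    have htW : t ∈ W α := by
      refine Set.Finite.subset (s.finite_support.union (Set.finite_singleton i)) ?_
      intro j hj
      by_cases hji : j = i
      · right; exact hji
      · left; rw [Function.mem_support, ← hts j hji]; exact hj
    obtain ⟨t, rfl⟩ := exists_of_mem_W htW
    obtain ⟨t', ht's, ht'⟩ := cyl_step i F1 s s' t hts
      (fun f hf hi => hall f (Finset.mem_union_left _ hf) hi)
      (fun f hf g hg => hall _ (Finset.mem_union_right _
        (Finset.mem_image.2 ⟨(f, g), Finset.mem_product.2 ⟨hf, hg⟩, rfl⟩))
        (by rw [cf_elm]; ring))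
    refine ⟨mem_W s', t', ?_, ht's⟩
    refine (hx t t' (fun f hf => ht' f (Finset.mem_union_left _ hf)) (hκ _ _ ?_)).1 htx
    intro m hm
    rw [← ev_hyp, ← ev_hyp]
    exact ht' _ (Finset.mem_union_right _ (Finset.mem_image_of_mem _ (Finset.mem_range.2 hm)))
  refine ⟨F2, fun f hf => (Finset.mem_filter.1 hf).2, fun s s' h _ => ⟨key s s' h, ?_⟩⟩
  exact key s' s (fun f hf => (h f hf).symm)

lemma inv_sub {β : Type*} (κ : ℚ → β) (i j : α) (x : Set (α → ℚ)) (hx : Inv κ x) :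
    Inv κ (sub i j x) := by
  obtain ⟨F, hF, hx⟩ := hx
  let P : (α →₀ ℚ) →ₗ[ℚ] (α →₀ ℚ) := (Finsupp.domLCongr (Equiv.swap i j)).toLinearMap
  have hP : ∀ s : α →₀ ℚ, ⇑(P s) = ⇑s ∘ Equiv.swap i j := by
    intro s; ext k
    simp [P]
  have hsg : ∀ s : α →₀ ℚ, sg (P s) = sg s := by
    intro s
    have : sg ∘ₗ P = sg := by
      apply Finsupp.lhom_ext
      intro a b
      simp [P, sg_single]
    exact LinearMap.congr_fun this s
  have hPs : ∀ k, P (Finsupp.single k 1) = Finsupp.single (Equiv.swap i j k) 1 := by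
    intro k; simp [P]
  let T : Fn α → Fn α := fun f => (f.1, f.2 ∘ₗ P)
  have hT : ∀ f k, cf (T f) k = cf f (Equiv.swap i j k) := by
    intro f k
    simp only [cf, T, LinearMap.comp_apply, hPs]
  refine ⟨F.image T, ?_, ?_⟩
  · intro f hf
    rw [Finset.mem_image] at hf
    obtain ⟨g, hg, rfl⟩ := hf
    obtain ⟨⟨a, ha⟩, ⟨b, hb⟩⟩ := hF g hg
    exact ⟨⟨Equiv.swap i j a, by simpa [hT] using ha⟩, ⟨Equiv.swap i j b, by simpa [hT] using hb⟩⟩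
  · intro s s' h1 h2
    have := hx (P s) (P s') (fun f hf => h1 (T f) (Finset.mem_image_of_mem _ hf))
      (by rw [hsg, hsg]; exact h2)
    rw [hP, hP] at this
    simp only [sub, Set.mem_setOf_eq, mem_W, true_and]
    exact this

lemma inv_diag [Infinite α] {β : Type*} (κ : ℚ → β) (i j : α) : Inv κ (diag i j) := by
  by_cases hij : i = j
  · subst hij
    exact ⟨∅, by simp, fun s s' _ _ => by simp [diag, mem_W]⟩
  · let f : Fn α := (0, Finsupp.lapply i - Finsupp.lapply j)
    refine ⟨{f}, ?_, ?_⟩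
    · intro g hg
      rw [Finset.mem_singleton] at hg
      subst hg
      obtain ⟨k, hk⟩ := Infinite.exists_notMem_finset ({i, j} : Finset α)
      simp only [Finset.mem_insert, Finset.mem_singleton, not_or] at hk
      refine ⟨⟨k, ?_⟩, ⟨i, ?_⟩⟩
      · simp [cf, f, Finsupp.single_apply, hk.1, hk.2]
      · simp [cf, f, Finsupp.single_apply, hij]
    · intro s s' h _
      have := h f (Finset.mem_singleton_self _)
      simpa [ev, f, diag, mem_W, sub_eq_zero] using this

lemma inv_union {β : Type*} (κ : ℚ → β) (x y : Set (α → ℚ)) (hx : Inv κ x) (hy : Inv κ y) :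
    Inv κ (x ∪ y) := by
  obtain ⟨F, hF, hx⟩ := hx
  obtain ⟨G, hG, hy⟩ := hy
  refine ⟨F ∪ G, ?_, ?_⟩
  · intro f hf
    rcases Finset.mem_union.1 hf with h | h
    · exact hF f h
    · exact hG f h
  · intro s s' h1 h2
    have a := hx s s' (fun f hf => h1 f (Finset.mem_union_left _ hf)) h2
    have b := hy s s' (fun f hf => h1 f (Finset.mem_union_right _ hf)) h2
    simp [a, b]

lemma inv_compl {β : Type*} (κ : ℚ → β) (x : Set (α → ℚ)) (hx : Inv κ x) :
    Inv κ (W α \ x) := by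
  obtain ⟨F, hF, hx⟩ := hx
  refine ⟨F, hF, fun s s' h1 h2 => ?_⟩
  have := hx s s' h1 h2
  simp [mem_W, this]

lemma inv_Sg [Infinite α] {β : Type*} (κ : ℚ → β) (N : ℕ)
    (hκ : ∀ q q' : ℚ, (∀ m : ℕ, m < N → (q = m ↔ q' = m)) → κ q = κ q')
    (S : Set (Set (α → ℚ))) (hS : ∀ x ∈ S, Inv κ x) (x : Set (α → ℚ)) (hx : SgMem S x) :
    Inv κ x := by
  induction hx with
  | base h => exact hS _ h
  | empty => exact ⟨∅, by simp, fun s s' _ _ => by simp⟩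
  | top => exact ⟨∅, by simp, fun s s' _ _ => by simp [mem_W]⟩
  | dgnl i j => exact inv_diag κ i j
  | union _ _ h1 h2 => exact inv_union κ _ _ h1 h2
  | compl _ h => exact inv_compl κ _ h
  | cylin i _ h => exact inv_cyl κ N hκ i _ h
  | subst i j _ h => exact inv_sub κ i j _ h

/-- the full colouring -/
noncomputable def col (N : ℕ) (q : ℚ) : Fin (N + 1) :=
  if h : ∃ m : Fin N, q = (m : ℕ) then h.choose.castSucc else Fin.last N

lemma col_nat (N : ℕ) (m : Fin (N + 1)) : col N ((m : ℕ) : ℚ) = m := by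
  unfold col
  split_ifs with h
  · have := h.choose_spec
    have h2 : (m : ℕ) = (h.choose : ℕ) := by exact_mod_cast this
    exact Fin.ext h2.symm
  · have : ¬ (m : ℕ) < N := fun hm => h ⟨⟨m, hm⟩, rfl⟩
    ext
    have := m.2
    simp only [Fin.val_last]
    omega

lemma col_congr (N : ℕ) (q q' : ℚ) (h : ∀ m : ℕ, m < N → (q = m ↔ q' = m)) :
    col N q = col N q' := by
  have : (fun m : Fin N => q = (m : ℕ)) = (fun m : Fin N => q' = (m : ℕ)) := by
    funext m; exact propext (h m m.2)
  by_cases hq : ∃ m : Fin N, q = (m : ℕ)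
  · obtain ⟨m, hm⟩ := hq
    have hm' := (h m m.2).1 hm
    rw [hm, hm']
  · have hq' : ¬ ∃ m : Fin N, q' = (m : ℕ) := by
      rintro ⟨m, hm⟩; exact hq ⟨m, (h m m.2).2 hm⟩
    unfold col
    rw [dif_neg hq, dif_neg hq']

lemma col_eq_iff (N : ℕ) (q : ℚ) (m : ℕ) (hm : m < N) :
    q = m ↔ col N q = ⟨m, by omega⟩ := by
  constructor
  · rintro rfl
    exact col_nat N ⟨m, by omega⟩
  · intro h
    unfold col at h
    split_ifs at h with hq
    · have := hq.choose_spec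
      rw [this]
      have := congrArg Fin.val h
      simp only [Fin.val_castSucc] at this
      rw [this]
    · have := congrArg Fin.val h
      simp only [Fin.val_last] at this
      omega

/-- merging colours `c` and `d` -/
noncomputable def mrg {N : ℕ} (c d : Fin (N + 1)) (e : Fin (N + 1)) : Fin (N + 1) :=
  if e = d then c else e

lemma inv_merge [Nonempty α] (N : ℕ) (c d : Fin (N + 1)) (x : Set (α → ℚ)) (F : Finset (Fn α))
    (hF : ∀ f ∈ F, good f)
    (hx : ∀ s s' : α →₀ ℚ, (∀ f ∈ F, (ev f s = 0 ↔ ev f s' = 0)) →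
      col N (sg s) = col N (sg s') → (⇑s ∈ x ↔ ⇑s' ∈ x))
    (hv : (∃ s : α →₀ ℚ, ⇑s ∈ x ∧ col N (sg s) = c ∧ ∀ f ∈ F, ev f s ≠ 0) ↔
      (∃ s : α →₀ ℚ, ⇑s ∈ x ∧ col N (sg s) = d ∧ ∀ f ∈ F, ev f s ≠ 0)) :
    Inv (fun q => mrg c d (col N q)) x := by
  classical
  have hj : ∀ f : Fn α, ∃ j, good f → cf f j ≠ 0 := by
    intro f
    by_cases hf : good f
    · obtain ⟨j, hj⟩ := hf.2
      exact ⟨j, fun _ => hj⟩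
    · exact ⟨Classical.arbitrary α, fun h => absurd h hf⟩
  choose J hJ using hj
  let F2 : Finset (Fn α) := (F ∪ (F ×ˢ Finset.range N).image
    (fun p => elm (J p.1) p.1 (hyp p.2))).filter good
  refine ⟨F2, fun f hf => (Finset.mem_filter.1 hf).2, fun s s' h1 h2 => ?_⟩
  have hFF : ∀ f ∈ F, (ev f s = 0 ↔ ev f s' = 0) := fun f hf =>
    h1 f (Finset.mem_filter.2 ⟨Finset.mem_union_left _ hf, hF f hf⟩)
  by_cases hc : ∃ f ∈ F, ev f s = 0
  · obtain ⟨f, hf, hfs⟩ := hc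
    have hfs' := (hFF f hf).1 hfs
    refine hx s s' hFF (col_congr N _ _ fun m hm => ?_)
    have hJf := hJ f (hF f hf)
    have e : ev (elm (J f) f (hyp m)) s = 0 ↔ ev (elm (J f) f (hyp m)) s' = 0 := by
      by_cases hcc : ∃ j, cf (elm (J f) f (hyp m)) j ≠ 0
      · refine h1 _ (Finset.mem_filter.2 ⟨Finset.mem_union_right _ (Finset.mem_image.2
          ⟨(f, m), Finset.mem_product.2 ⟨hf, Finset.mem_range.2 hm⟩, rfl⟩), ⟨J f, ?_⟩, hcc⟩)
        rw [cf_elm]; ring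
      · push Not at hcc
        rw [const_of_cf _ hcc, const_of_cf _ hcc]
    rw [ev_elm, ev_elm, hfs, hfs'] at e
    rw [← ev_hyp, ← ev_hyp]
    simpa [hJf] using e
  · push Not at hc
    have hc' : ∀ f ∈ F, ev f s' ≠ 0 := fun f hf h => hc f hf ((hFF f hf).2 h)
    have gen : ∀ e (u : α →₀ ℚ), (∀ f ∈ F, ev f u ≠ 0) → col N (sg u) = e →
        (⇑u ∈ x ↔ ∃ s : α →₀ ℚ, ⇑s ∈ x ∧ col N (sg s) = e ∧ ∀ f ∈ F, ev f s ≠ 0) := by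
      intro e u hu hue
      constructor
      · intro h; exact ⟨u, h, hue, hu⟩
      · rintro ⟨w, hw, hwe, hwF⟩
        refine (hx w u (fun f hf => ?_) (hwe.trans hue.symm)).1 hw
        exact ⟨fun h => absurd h (hwF f hf), fun h => absurd h (hu f hf)⟩
    by_cases hcol : col N (sg s) = col N (sg s')
    · exact hx s s' hFF hcol
    · simp only [mrg] at h2
      split_ifs at h2 with h3 h4 h4
      · exact absurd (h3.trans h4.symm) hcol
      · rw [gen d s hc h3, gen c s' hc' h2.symm]; exact hv.symm
      · rw [gen c s hc h2, gen d s' hc' h4]; exact hv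
      · exact absurd h2 hcol

lemma not_inv_aElem [Nonempty α] {β : Type*} (κ : ℚ → β) (k l : ℕ) (hkl : k ≠ l)
    (h : κ k = κ l) : ¬ Inv κ (aElem k : Set (α → ℚ)) := by
  rintro ⟨F, hF, hx⟩
  obtain ⟨s, hs, hsF⟩ := exists_generic (k : ℚ) F hF
  obtain ⟨s', hs', hsF'⟩ := exists_generic (l : ℚ) F hF
  have := hx s s' (fun f hf => ⟨fun h => absurd h (hsF f hf), fun h => absurd h (hsF' f hf)⟩)
    (by rw [hs, hs', h])
  rw [mem_aElem, mem_aElem, hs, hs'] at this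
  have h2 := this.1 rfl
  exact hkl (by exact_mod_cast h2.symm)

end QPEA

open QPEA

/-- For every natural number `n`, the algebra `A_n` (the subalgebra of `C`
generated by `{a_i : i < 2^n}`) cannot be generated by `n` elements: for every
subset `X` of `A_n` with `|X| ≤ n`, the subalgebra of `C` generated by `X` is not `A_n`. -/
theorem stmt0 {α : Type*} [Infinite α] (n : ℕ)
    (X : Set (Set (α → ℚ)))
    (hX : X ⊆ Sg {x : Set (α → ℚ) | ∃ i : ℕ, i < 2 ^ n ∧ x = aElem i})
    (hfin : X.Finite) (hcard : X.ncard ≤ n) :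
    Sg X ≠ Sg {x : Set (α → ℚ) | ∃ i : ℕ, i < 2 ^ n ∧ x = aElem i} := by
  classical
  intro hEq
  have hA : ∀ x ∈ Sg {x : Set (α → ℚ) | ∃ i : ℕ, i < 2 ^ n ∧ x = aElem i},
      Inv (col (2 ^ n)) x := by
    intro x hx
    refine inv_Sg (col (2 ^ n)) (2 ^ n) (col_congr _) _ ?_ x hx
    rintro y ⟨i, hi, rfl⟩
    refine ⟨∅, by simp, fun s s' _ h => ?_⟩
    rw [mem_aElem, mem_aElem, col_eq_iff _ _ i hi, col_eq_iff _ _ i hi, h]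
  have hA' : ∀ x : X, Inv (col (2 ^ n)) (x : Set (α → ℚ)) := fun x => hA _ (hX x.2)
  choose F hF hFx using hA'
  haveI : Fintype X := hfin.fintype
  let v : Fin (2 ^ n + 1) → (X → Prop) := fun c x =>
    ∃ s : α →₀ ℚ, ⇑s ∈ (x : Set (α → ℚ)) ∧ col (2 ^ n) (sg s) = c ∧ ∀ f ∈ F x, ev f s ≠ 0
  have hlt : Fintype.card (X → Prop) < Fintype.card (Fin (2 ^ n + 1)) := by
    rw [Fintype.card_fun, Fintype.card_fin, Fintype.card_prop, ← Nat.card_eq_fintype_card,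
      Nat.card_coe_set_eq]
    exact Nat.lt_succ_of_le (Nat.pow_le_pow_right (by norm_num) hcard)
  obtain ⟨c, d, hcd, hv⟩ := Fintype.exists_ne_map_eq_of_card_lt v hlt
  have hall : ∀ x ∈ Sg X, Inv (fun q => mrg c d (col (2 ^ n) q)) x := by
    intro x hx
    refine inv_Sg _ (2 ^ n) (fun q q' h => ?_) X ?_ x hx
    · simp only [col_congr _ q q' h]
    · intro y hy
      exact inv_merge _ c d y (F ⟨y, hy⟩) (hF ⟨y, hy⟩) (hFx ⟨y, hy⟩)
        (iff_of_eq (congrFun hv ⟨y, hy⟩))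
  have hm : mrg c d (col (2 ^ n) ((c : ℕ) : ℚ)) = mrg c d (col (2 ^ n) ((d : ℕ) : ℚ)) := by
    rw [col_nat, col_nat]
    simp [mrg, hcd]
  have hne : (c : ℕ) ≠ (d : ℕ) := fun h => hcd (Fin.ext h)
  have hc := c.2
  have hd := d.2
  by_cases hlt : (c : ℕ) < 2 ^ n
  · refine not_inv_aElem _ (c : ℕ) (d : ℕ) hne hm (hall (aElem (c : ℕ)) ?_)
    rw [hEq]
    exact SgMem.base ⟨c, hlt, rfl⟩
  · refine not_inv_aElem _ (d : ℕ) (c : ℕ) hne.symm hm.symm (hall (aElem (d : ℕ)) ?_)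
    rw [hEq]
    exact SgMem.base ⟨d, by omega, rfl⟩
end

section
/- For every natural number n, the quasi-polyadic equality algebra A_n (the subalgebra of C generated by {a_i : i < 2^n}) can be generated by n+1 elements: there exists a subset X of A_n with |X| = n+1 such that the subalgebra of C generated by X equals A_n. -/
/- Formalization of quasi-polyadic equality set algebras over the weak space
   `V = {s : α → ℚ | s i ≠ 0 for finitely many i}`, where the infinite ordinal α
   is formalized as an infinite type. -/

open scoped Classical

open QPEA

namespace QPEA

theorem SgMem.mono' {α : Type*} {X S : Set (Set (α → ℚ))} (h : ∀ x ∈ X, SgMem S x)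
    {x : Set (α → ℚ)} (hx : SgMem X x) : SgMem S x := by
  induction hx with
  | base hx => exact h _ hx
  | empty => exact .empty
  | top => exact .top
  | dgnl i j => exact .dgnl i j
  | union _ _ h1 h2 => exact .union h1 h2
  | compl _ h1 => exact .compl h1
  | cylin i _ h1 => exact .cylin i h1
  | subst i j _ h1 => exact .subst i j h1

theorem SgMem.sub' {α : Type*} {S : Set (Set (α → ℚ))} {x : Set (α → ℚ)}
    (h : ∀ x ∈ S, x ⊆ W α) (hx : SgMem S x) : x ⊆ W α := by
  induction hx with
  | base hx => exact h _ hx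
  | empty => exact Set.empty_subset _
  | top => exact subset_rfl
  | dgnl i j => exact fun s hs => hs.1
  | union _ _ h1 h2 => exact Set.union_subset h1 h2
  | compl _ h1 => exact Set.diff_subset
  | cylin i _ h1 => exact fun s hs => hs.1
  | subst i j _ h1 => exact fun s hs => hs.1

theorem SgMem.inter' {α : Type*} {S : Set (Set (α → ℚ))} {x y : Set (α → ℚ)}
    (hx : SgMem S x) (hy : SgMem S y) : SgMem S (W α ∩ (x ∩ y)) := by
  have : W α ∩ (x ∩ y) = W α \ ((W α \ x) ∪ (W α \ y)) := by
    ext s; simp only [Set.mem_inter_iff, Set.mem_diff, Set.mem_union]; tauto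
  rw [this]
  exact .compl (.union (.compl hx) (.compl hy))

theorem SgMem.bUnion' {α : Type*} {S : Set (Set (α → ℚ))} (f : ℕ → Set (α → ℚ))
    (N : ℕ) (h : ∀ i < N, SgMem S (f i)) : SgMem S {s | ∃ i < N, s ∈ f i} := by
  induction N with
  | zero => simpa using SgMem.empty
  | succ N ih =>
    have : {s | ∃ i < N + 1, s ∈ f i} = {s | ∃ i < N, s ∈ f i} ∪ f N := by
      ext s
      simp only [Set.mem_setOf_eq, Set.mem_union]
      exact Nat.exists_lt_succ_right
    rw [this]
    exact .union (ih fun i hi => h i (by omega)) (h N (by omega))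

theorem SgMem.bInter' {α : Type*} {S : Set (Set (α → ℚ))} (f : ℕ → Set (α → ℚ))
    (N : ℕ) (h : ∀ i < N, SgMem S (f i)) :
    SgMem S {s | s ∈ W α ∧ ∀ i < N, s ∈ f i} := by
  induction N with
  | zero => simpa using SgMem.top
  | succ N ih =>
    have : {s | s ∈ W α ∧ ∀ i < N + 1, s ∈ f i}
        = W α ∩ ({s | s ∈ W α ∧ ∀ i < N, s ∈ f i} ∩ f N) := by
      ext s
      simp only [Set.mem_setOf_eq, Set.mem_inter_iff, Nat.forall_lt_succ_right]
      tauto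
    rw [this]
    exact .inter' (ih fun i hi => h i (by omega)) (h N (by omega))

/-- The generators. -/
def bGen (α : Type*) (n k : ℕ) : Set (α → ℚ) :=
  {s | ∃ i < 2 ^ n, s ∈ {s : α → ℚ | (k = n ∨ i.testBit k = true) ∧ s ∈ aElem i}}

theorem aElem_disj {α : Type*} {i j : ℕ} {s : α → ℚ} (hi : s ∈ aElem i) (hj : s ∈ aElem j) :
    i = j := by
  have := hi.2.trans hj.2.symm
  exact_mod_cast this

theorem aElem_ne {α : Type*} [Nonempty α] (i : ℕ) : ∃ s : α → ℚ, s ∈ aElem i := by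
  obtain ⟨a⟩ := ‹Nonempty α›
  refine ⟨Pi.single a (i : ℚ), ?_, ?_⟩
  · refine (Set.finite_singleton a).subset fun j hj => ?_
    by_contra h
    exact hj (Pi.single_eq_of_ne h _)
  · rw [finsum_eq_single _ a]
    · simp
    · intro j hj
      simp [Pi.single_eq_of_ne hj]

theorem mem_bGen {α : Type*} {n k i : ℕ} (hi : i < 2 ^ n) {s : α → ℚ} (hs : s ∈ aElem i) :
    s ∈ bGen α n k ↔ (k = n ∨ i.testBit k = true) := by
  constructor
  · rintro ⟨j, hj, h, hsj⟩
    rwa [aElem_disj hs hsj]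
  · intro h
    exact ⟨i, hi, h, hs⟩

theorem bGen_inj {α : Type*} [Nonempty α] {n j k : ℕ} (hj : j ≤ n)
    (h : bGen α n j = bGen α n k) : j = k := by
  obtain ⟨s, hs⟩ := aElem_ne (α := α) 0
  have h0 : j = n ↔ k = n := by
    have h1 := mem_bGen (n := n) (k := j) (by positivity) hs
    have h2 := mem_bGen (n := n) (k := k) (by positivity) hs
    rw [h, h2] at h1
    simpa using h1.symm
  by_cases hjn : j = n
  · rw [hjn, h0.1 hjn]
  · obtain ⟨s, hs⟩ := aElem_ne (α := α) (2 ^ j)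
    have hlt : 2 ^ j < 2 ^ n := Nat.pow_lt_pow_right (by norm_num) (by omega)
    have h1 := mem_bGen (n := n) (k := j) hlt hs
    have h2 := mem_bGen (n := n) (k := k) hlt hs
    rw [h, h2] at h1
    have h3 := h1.2 (Or.inr (by simp))
    rcases h3 with h3 | h3
    · exact absurd (h0.2 h3) hjn
    · simpa [Nat.testBit_two_pow] using h3

theorem aElem_eq {α : Type*} {n i : ℕ} (hi : i < 2 ^ n) :
    (aElem i : Set (α → ℚ)) = {s | s ∈ W α ∧ ∀ k < n + 1, s ∈
      (if k = n ∨ i.testBit k = true then bGen α n k else W α \ bGen α n k)} := by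
  ext s
  constructor
  · intro hs
    refine ⟨hs.1, fun k _ => ?_⟩
    have := mem_bGen (k := k) hi hs
    split_ifs with h
    · exact this.2 h
    · exact ⟨hs.1, fun h' => h (this.1 h')⟩
  · rintro ⟨hW, h⟩
    have hn := h n (by omega)
    rw [if_pos (Or.inl rfl)] at hn
    obtain ⟨j, hj, -, hs⟩ := hn
    have : i = j := by
      apply Nat.eq_of_testBit_eq
      intro k
      rcases lt_or_ge k n with hk | hk
      · have h1 := h k (by omega)
        have h2 := mem_bGen (k := k) hj hs
        have hkn : k ≠ n := by omega
        simp only [hkn, false_or] at h1 h2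
        split_ifs at h1 with h3
        · rw [h3, h2.1 h1]
        · have h4 := fun h' => h1.2 (h2.2 h')
          rw [Bool.eq_false_iff.2 h3, Bool.eq_false_iff.2 h4]
      · have hp : 2 ^ n ≤ 2 ^ k := Nat.pow_le_pow_right (by norm_num) hk
        rw [Nat.testBit_lt_two_pow (hi.trans_le hp), Nat.testBit_lt_two_pow (hj.trans_le hp)]
    rwa [this]

end QPEA

/-- For every natural number `n`, the algebra `A_n` (the subalgebra of `C`
generated by `{a_i : i < 2^n}`) can be generated by `n+1` elements: there is a subset
`X` of `A_n` with `|X| = n + 1` whose generated subalgebra is `A_n`. -/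
theorem stmt1 {α : Type*} [Infinite α] (n : ℕ) :
    ∃ X : Set (Set (α → ℚ)),
      X ⊆ Sg {x : Set (α → ℚ) | ∃ i : ℕ, i < 2 ^ n ∧ x = aElem i} ∧
      X.Finite ∧ X.ncard = n + 1 ∧
      Sg X = Sg {x : Set (α → ℚ) | ∃ i : ℕ, i < 2 ^ n ∧ x = aElem i} := by
  have hsub : bGen α n '' Set.Iio (n + 1) ⊆
      Sg {x : Set (α → ℚ) | ∃ i : ℕ, i < 2 ^ n ∧ x = aElem i} := by
    rintro _ ⟨k, -, rfl⟩
    apply SgMem.bUnion'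
    intro i hi
    by_cases h : k = n ∨ i.testBit k = true
    · simp only [h, true_and, Set.setOf_mem_eq]
      exact .base ⟨i, hi, rfl⟩
    · simp only [h, false_and, Set.setOf_false]
      exact .empty
  refine ⟨bGen α n '' Set.Iio (n + 1), hsub, (Set.finite_Iio _).image _, ?_, ?_⟩
  · rw [Set.ncard_image_of_injOn]
    · rw [← Finset.coe_Iio, Set.ncard_coe_finset, Nat.card_Iio]
    · intro j hj k _ h
      exact bGen_inj (Nat.lt_succ_iff.1 hj) h
  · apply Set.Subset.antisymm
    · intro x hx
      exact SgMem.mono' hsub hx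
    · intro x hx
      refine SgMem.mono' ?_ hx
      rintro _ ⟨i, hi, rfl⟩
      rw [aElem_eq hi]
      apply SgMem.bInter'
      intro k hk
      have hb : SgMem (bGen α n '' Set.Iio (n + 1)) (bGen α n k) := .base ⟨k, hk, rfl⟩
      split_ifs
      · exact hb
      · exact .compl hb
end

section
/- For every infinite ordinal α there exists a simple quasi-polyadic equality set algebra of dimension α, namely the subalgebra A_1 of C generated by the two elements a_0 and a_1, which is generated by two elements but is not generated by any single element: for every x ∈ A_1, the subalgebra of C generated by {x} is not equal to A_1. -/
/- Formalization of quasi-polyadic equality set algebras over the weak space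
   `V = {s : α → ℚ | s i ≠ 0 for finitely many i}`, where the infinite ordinal α
   is formalized as an infinite type. -/

open scoped Classical

open QPEA

namespace QPEA

variable {α : Type*}

noncomputable def L (r s : α → ℚ) : ℚ := ∑ᶠ i, r i * s i

lemma supp_fin {s : α → ℚ} (hs : s ∈ W α) (r : α → ℚ) :
    (Function.support fun i => r i * s i).Finite :=
  Set.Finite.subset hs (by
    intro i hi
    simp only [Function.mem_support] at hi
    exact right_ne_zero_of_mul hi)

lemma W_update {s : α → ℚ} (hs : s ∈ W α) (i : α) (q : ℚ) : Function.update s i q ∈ W α := by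
  refine Set.Finite.subset (Set.Finite.insert i hs) ?_
  intro j hj
  by_cases h : j = i
  · exact Or.inl h
  · right
    simpa [Function.update_of_ne h] using hj

lemma W_swap {s : α → ℚ} (hs : s ∈ W α) (i j : α) : s ∘ Equiv.swap i j ∈ W α := by
  exact Set.Finite.preimage (Equiv.injective (Equiv.swap i j)).injOn hs

lemma L_update {s : α → ℚ} (hs : s ∈ W α) (r : α → ℚ) (i : α) (q : ℚ) :
    L r (Function.update s i q) = L r s + r i * (q - s i) := by
  have h : (∑ᶠ j, (Function.update s i q j - s j) * r j) = r i * (q - s i) := by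
    rw [finsum_eq_single _ i]
    · simp; ring
    · intro j hj
      simp [Function.update_of_ne hj]
  have h2 := finsum_sub_distrib (supp_fin (W_update hs i q) r) (supp_fin hs r)
  have h3 : (∑ᶠ j, (r j * Function.update s i q j - r j * s j)) = r i * (q - s i) := by
    rw [← h]; congr 1; ext j; ring
  unfold L
  linarith

lemma L_swap (r s : α → ℚ) (i j : α) :
    L r (s ∘ Equiv.swap i j) = L (r ∘ Equiv.swap i j) s := by
  unfold L
  rw [← finsum_comp_equiv (Equiv.swap i j)]
  simp

lemma L_comb {s : α → ℚ} (hs : s ∈ W α) (a b : ℚ) (r r' : α → ℚ) :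
    L (fun j => a * r j - b * r' j) s = a * L r s - b * L r' s := by
  unfold L
  rw [mul_finsum _ , mul_finsum _, ← finsum_sub_distrib]
  · congr 1; ext j; ring
  · exact (supp_fin hs r).subset (by intro j; simp)
  · exact (supp_fin hs r').subset (by intro j; simp)

lemma swap_swap_comp (s : α → ℚ) (i j : α) :
    (s ∘ Equiv.swap i j) ∘ Equiv.swap i j = s := by
  ext k; simp

/-- `y` is determined by the finite set `F` of affine equations. -/
def Det (F : Finset ((α → ℚ) × ℚ)) (y : Set (α → ℚ)) : Prop :=
  ∀ s ∈ W α, ∀ s' ∈ W α, (∀ f ∈ F, L f.1 s = f.2 ↔ L f.1 s' = f.2) → (s ∈ y → s' ∈ y)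

lemma Det.iff {F : Finset ((α → ℚ) × ℚ)} {y : Set (α → ℚ)} (h : Det F y) :
    ∀ s ∈ W α, ∀ s' ∈ W α, (∀ f ∈ F, L f.1 s = f.2 ↔ L f.1 s' = f.2) → (s ∈ y ↔ s' ∈ y) :=
  fun s hs s' hs' H => ⟨h s hs s' hs' H, h s' hs' s hs fun f hf => (H f hf).symm⟩

lemma Det.mono {F F' : Finset ((α → ℚ) × ℚ)} {y : Set (α → ℚ)} (h : Det F y) (hF : F ⊆ F') :
    Det F' y := fun s hs s' hs' H => h s hs s' hs' fun f hf => H f (hF hf)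

lemma det_cyl {F : Finset ((α → ℚ) × ℚ)} {y : Set (α → ℚ)} (h : Det F y) (i : α) :
    ∃ F' : Finset ((α → ℚ) × ℚ), (∀ f ∈ F', f.1 i = 0) ∧ Det F' (cyl i y) := by
  refine ⟨(F.filter fun f => f.1 i = 0) ∪ (F ×ˢ F).image (fun p =>
    ((fun j => p.2.1 i * p.1.1 j - p.1.1 i * p.2.1 j), p.2.1 i * p.1.2 - p.1.1 i * p.2.2)), ?_, ?_⟩
  · intro f hf
    rcases Finset.mem_union.1 hf with hf | hf
    · exact (Finset.mem_filter.1 hf).2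
    · obtain ⟨p, hp, rfl⟩ := Finset.mem_image.1 hf
      simp; ring
  intro s hs s' hs' H hsy
  obtain ⟨-, t, hty, ht⟩ := hsy
  have ht' : t = Function.update s i (t i) := by
    ext j
    by_cases hj : j = i
    · subst hj; simp
    · simp [Function.update_of_ne hj, ht j hj]
  set q := t i with hq
  have H0 : ∀ f ∈ F, f.1 i = 0 → (L f.1 s = f.2 ↔ L f.1 s' = f.2) := fun f hf h0 =>
    H f (Finset.mem_union_left _ (Finset.mem_filter.2 ⟨hf, h0⟩))
  have H1 : ∀ f ∈ F, ∀ g ∈ F,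
      (g.1 i * L f.1 s - f.1 i * L g.1 s = g.1 i * f.2 - f.1 i * g.2 ↔
       g.1 i * L f.1 s' - f.1 i * L g.1 s' = g.1 i * f.2 - f.1 i * g.2) := by
    intro f hf g hg
    have := H _ (Finset.mem_union_right _ (Finset.mem_image.2
      ⟨(f, g), Finset.mem_product.2 ⟨hf, hg⟩, rfl⟩))
    simpa only [L_comb hs, L_comb hs'] using this
  have key : ∃ q', ∀ f ∈ F, (L f.1 (Function.update s i q) = f.2 ↔
      L f.1 (Function.update s' i q') = f.2) := by
    by_cases hc : ∃ f ∈ F, f.1 i ≠ 0 ∧ L f.1 (Function.update s i q) = f.2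
    · obtain ⟨f, hf, hfi, hfq⟩ := hc
      refine ⟨s' i + (f.2 - L f.1 s') / f.1 i, fun g hg => ?_⟩
      rw [L_update hs] at hfq
      rw [L_update hs, L_update hs']
      by_cases hgi : g.1 i = 0
      · simpa [hgi] using H0 g hg hgi
      have h1 := H1 f hf g hg
      have e1 : q - s i = (f.2 - L f.1 s) / f.1 i := by
        field_simp; linarith
      rw [e1]
      have e2 : ∀ A B : ℚ, (A + g.1 i * ((f.2 - B) / f.1 i) = g.2 ↔
          g.1 i * B - f.1 i * A = g.1 i * f.2 - f.1 i * g.2) := by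
        intro A B
        field_simp
        constructor <;> intro h <;> linarith
      rw [e2, h1, ← e2]
      ring_nf
    · push Not at hc
      obtain ⟨q', hq'⟩ := Infinite.exists_notMem_finset
        (F.image fun f => s' i + (f.2 - L f.1 s') / f.1 i)
      refine ⟨q', fun g hg => ?_⟩
      by_cases hgi : g.1 i = 0
      · rw [L_update hs, L_update hs']
        simpa [hgi] using H0 g hg hgi
      · refine iff_of_false (hc g hg hgi) fun h => hq' (Finset.mem_image.2 ⟨g, hg, ?_⟩)
        rw [L_update hs'] at h
        field_simp
        linarith
  obtain ⟨q', hq'⟩ := key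
  refine ⟨hs', Function.update s' i q', ?_, fun j hj => Function.update_of_ne hj _ _⟩
  rw [ht'] at hty
  exact h _ (W_update hs i q) _ (W_update hs' i q') hq' hty

lemma det_poly (t : ℚ) (r : α → ℚ) : Det {(r, t)} (poly t r) := by
  intro s hs s' hs' H h
  refine ⟨hs', ?_⟩
  have := H (r, t) (by simp)
  exact (this.1 h.2.symm).symm

lemma mem_diag_iff {s : α → ℚ} (hs : s ∈ W α) {i j : α} (hij : i ≠ j) :
    s ∈ diag i j ↔ L (fun k => if k = i then 1 else if k = j then -1 else 0) s = 0 := by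
  have e : L (fun k => if k = i then 1 else if k = j then -1 else 0) s = s i - s j := by
    unfold L
    rw [finsum_eq_sum_of_support_subset (s := {i, j})]
    · rw [Finset.sum_pair hij]
      simp [hij.symm]; ring
    · intro k hk
      by_contra hk'
      simp at hk hk'
      simp [hk'] at hk
  rw [e, sub_eq_zero]
  exact ⟨fun h => h.2, fun h => ⟨hs, h⟩⟩

lemma det_Sg {S : Set (Set (α → ℚ))} (hS : ∀ x ∈ S, ∃ F, Det F x) {y : Set (α → ℚ)}
    (hy : SgMem S y) : ∃ F, Det F y := by
  induction hy with
  | base h => exact hS _ h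
  | empty => exact ⟨∅, fun s _ s' _ _ h => h⟩
  | top => exact ⟨∅, fun s _ s' hs' _ _ => hs'⟩
  | dgnl i j =>
    by_cases hij : i = j
    · subst hij
      exact ⟨∅, fun s _ s' hs' _ _ => ⟨hs', rfl⟩⟩
    · refine ⟨{((fun k => if k = i then 1 else if k = j then -1 else 0), 0)}, fun s hs s' hs' H h => ?_⟩
      rw [mem_diag_iff hs hij] at h
      rw [mem_diag_iff hs' hij]
      exact (H _ (Finset.mem_singleton_self _)).1 h
  | union _ _ ih1 ih2 =>
    obtain ⟨F1, h1⟩ := ih1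
    obtain ⟨F2, h2⟩ := ih2
    refine ⟨F1 ∪ F2, fun s hs s' hs' H h => ?_⟩
    exact h.imp (h1.mono Finset.subset_union_left s hs s' hs' H)
      (h2.mono Finset.subset_union_right s hs s' hs' H)
  | compl _ ih =>
    obtain ⟨F, h⟩ := ih
    exact ⟨F, fun s hs s' hs' H hh => ⟨hs', fun h' => hh.2 ((h.iff s hs s' hs' H).2 h')⟩⟩
  | cylin i _ ih =>
    obtain ⟨F, h⟩ := ih
    obtain ⟨F', -, h'⟩ := det_cyl h i
    exact ⟨F', h'⟩
  | subst i j _ ih =>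
    obtain ⟨F, h⟩ := ih
    refine ⟨F.image fun f => (f.1 ∘ Equiv.swap i j, f.2), fun s hs s' hs' H hh => ⟨hs', ?_⟩⟩
    refine h _ (W_swap hs i j) _ (W_swap hs' i j) (fun f hf => ?_) hh.2
    rw [L_swap, L_swap]
    exact H _ (Finset.mem_image_of_mem _ hf)

/-- finite sets of equations, none of which has constant coefficients -/
def NC (F : Finset ((α → ℚ) × ℚ)) : Prop := ∀ f ∈ F, ∃ i j, f.1 i ≠ f.1 j

lemma exists_generic_s2 [Infinite α] (m : ℚ) (F : Finset ((α → ℚ) × ℚ)) (hF : NC F) :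
    ∃ s ∈ W α, L (fun _ => 1) s = m ∧ ∀ f ∈ F, L f.1 s ≠ f.2 := by
  induction F using Finset.induction_on with
  | empty =>
    obtain ⟨k⟩ : Nonempty α := inferInstance
    have h0 : (fun _ => 0 : α → ℚ) ∈ W α := by simp [W]
    refine ⟨Function.update (fun _ => 0) k m, W_update h0 k m, ?_, by simp⟩
    rw [L_update h0]
    simp [L]
  | insert f F _ ih =>
    obtain ⟨s, hs, hm, hsF⟩ := ih fun f hf => hF f (Finset.mem_insert_of_mem hf)
    obtain ⟨i, j, hij⟩ := hF f (Finset.mem_insert_self _ _)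
    have hne : j ≠ i := by rintro rfl; exact hij rfl
    obtain ⟨c, hc⟩ := Infinite.exists_notMem_finset
        ((insert f F).image fun f => (f.2 - L f.1 s) / (f.1 i - f.1 j))
    have hL : ∀ r, L r (Function.update (Function.update s i (s i + c)) j (s j - c)) =
        L r s + c * (r i - r j) := by
      intro r
      rw [L_update (W_update hs _ _), L_update hs, Function.update_of_ne hne]
      ring
    refine ⟨Function.update (Function.update s i (s i + c)) j (s j - c),
      W_update (W_update hs _ _) _ _, ?_, ?_⟩
    · rw [hL]; simpa using hm
    · intro g hg h
      rw [hL] at h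
      by_cases hgi : g.1 i - g.1 j = 0
      · rcases Finset.mem_insert.1 hg with rfl | hg'
        · exact hij (sub_eq_zero.1 hgi)
        · rw [hgi] at h
          exact hsF g hg' (by simpa using h)
      · refine hc (Finset.mem_image.2 ⟨g, hg, ?_⟩)
        field_simp
        linarith

/-- `y` is generically constant on the points of weight `k` or `l`. -/
def GC (k l : ℚ) (y : Set (α → ℚ)) : Prop :=
  ∃ (F : Finset ((α → ℚ) × ℚ)) (v : Prop), NC F ∧
    ∀ s ∈ W α, (L (fun _ => 1) s = k ∨ L (fun _ => 1) s = l) →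
      (∀ f ∈ F, L f.1 s ≠ f.2) → (s ∈ y ↔ v)

lemma gc_of_det {k l : ℚ} {F : Finset ((α → ℚ) × ℚ)} {y : Set (α → ℚ)} (h : Det F y)
    (hF : k = l ∨ ∀ f ∈ F, ∃ i, f.1 i = 0) : GC k l y := by
  let F' := F.filter fun f => ∃ i j, f.1 i ≠ f.1 j
  by_cases hex : ∃ s ∈ W α, (L (fun _ => 1) s = k ∨ L (fun _ => 1) s = l) ∧
      ∀ f ∈ F', L f.1 s ≠ f.2
  · obtain ⟨s, hs, hkl, hsF⟩ := hex
    refine ⟨F', s ∈ y, fun f hf => (Finset.mem_filter.1 hf).2, fun s' hs' hkl' hsF' => ?_⟩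
    refine h.iff s' hs' s hs fun f hf => ?_
    by_cases hnc : ∃ i j, f.1 i ≠ f.1 j
    · have : f ∈ F' := Finset.mem_filter.2 ⟨hf, hnc⟩
      exact iff_of_false (hsF' f this) (hsF f this)
    · push Not at hnc
      have hLe : L f.1 s' = L f.1 s := by
        rcases hF with rfl | hF
        · by_cases hα : Nonempty α
          · obtain ⟨i⟩ := hα
            have e : ∀ u ∈ W α, L f.1 u = f.1 i * L (fun _ => 1) u := by
              intro u hu
              have h2 := L_comb hu (f.1 i) 0 (fun _ => 1) (fun _ => 1)
              have h3 : f.1 = fun j => f.1 i * (fun _ => (1 : ℚ)) j - 0 * (fun _ => (1 : ℚ)) j := by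
                ext j; rw [hnc j i]; simp
              rw [← h3] at h2
              simpa using h2
            rw [e s hs, e s' hs']
            simp only [or_self] at hkl hkl'
            rw [hkl, hkl']
          · rw [not_nonempty_iff] at hα
            rw [Subsingleton.elim s s']
        · obtain ⟨i, hi⟩ := hF f hf
          have : f.1 = fun _ => 0 := by ext j; rw [hnc j i, hi]
          rw [this]; simp [L]
      rw [hLe]
  · exact ⟨F', True, fun f hf => (Finset.mem_filter.1 hf).2,
      fun s hs h1 h2 => absurd ⟨s, hs, h1, h2⟩ hex⟩

lemma gc_Sg [Infinite α] {k l : ℚ} {x : Set (α → ℚ)} (hx : GC k l x)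
    (hdet : ∀ y, SgMem {x} y → ∃ F, Det F y) {y : Set (α → ℚ)} (hy : SgMem {x} y) : GC k l y := by
  induction hy with
  | base h => rw [Set.mem_singleton_iff.1 h]; exact hx
  | empty => exact ⟨∅, False, by simp [NC], by simp⟩
  | top => exact ⟨∅, True, by simp [NC], by simp +contextual⟩
  | dgnl i j =>
    by_cases hij : i = j
    · subst hij
      exact ⟨∅, True, by simp [NC], by simp +contextual [diag]⟩
    · refine ⟨{((fun k => if k = i then 1 else if k = j then -1 else 0), 0)}, False, ?_, fun s hs _ H => ?_⟩
      rotate_left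
      · rw [mem_diag_iff hs hij, iff_false]
        exact H _ (Finset.mem_singleton_self _)
      · intro f hf
        rw [Finset.mem_singleton.1 hf]
        refine ⟨i, j, ?_⟩
        simp [Ne.symm hij]
        norm_num
  | union _ _ ih1 ih2 =>
    obtain ⟨F1, v1, n1, h1⟩ := ih1
    obtain ⟨F2, v2, n2, h2⟩ := ih2
    refine ⟨F1 ∪ F2, v1 ∨ v2, fun f hf => (Finset.mem_union.1 hf).elim (n1 f) (n2 f),
      fun s hs hkl H => or_congr
        (h1 s hs hkl fun f hf => H f (Finset.mem_union_left _ hf))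
        (h2 s hs hkl fun f hf => H f (Finset.mem_union_right _ hf))⟩
  | compl _ ih =>
    obtain ⟨F, v, n, h⟩ := ih
    exact ⟨F, ¬ v, n, fun s hs hkl H => ⟨fun hh hv => hh.2 ((h s hs hkl H).2 hv),
      fun hv => ⟨hs, fun hh => hv ((h s hs hkl H).1 hh)⟩⟩⟩
  | cylin i hz _ =>
    obtain ⟨F, h⟩ := hdet _ hz
    obtain ⟨F', hF', h'⟩ := det_cyl h i
    exact gc_of_det h' (Or.inr fun f hf => ⟨i, hF' f hf⟩)
  | subst i j _ ih =>
    obtain ⟨F, v, n, h⟩ := ih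
    refine ⟨F.image fun f => (f.1 ∘ Equiv.swap i j, f.2), v, ?_, fun s hs hkl H => ?_⟩
    · intro f hf
      obtain ⟨g, hg, rfl⟩ := Finset.mem_image.1 hf
      obtain ⟨a, b, hab⟩ := n g hg
      exact ⟨Equiv.swap i j a, Equiv.swap i j b, by simpa using hab⟩
    · rw [← h (s ∘ Equiv.swap i j) (W_swap hs i j)]
      · exact ⟨fun h => h.2, fun h => ⟨hs, h⟩⟩
      · rw [L_swap]; exact hkl
      · intro f hf
        rw [L_swap]
        exact H _ (Finset.mem_image_of_mem _ hf)

lemma gc_merge {k l : ℚ} {x : Set (α → ℚ)} {F1 F2 : Finset ((α → ℚ) × ℚ)} {v1 v2 : Prop}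
    (n1 : NC F1) (n2 : NC F2) (hv : v1 ↔ v2)
    (h1 : ∀ s ∈ W α, (L (fun _ => 1) s = k ∨ L (fun _ => 1) s = k) →
      (∀ f ∈ F1, L f.1 s ≠ f.2) → (s ∈ x ↔ v1))
    (h2 : ∀ s ∈ W α, (L (fun _ => 1) s = l ∨ L (fun _ => 1) s = l) →
      (∀ f ∈ F2, L f.1 s ≠ f.2) → (s ∈ x ↔ v2)) : GC k l x := by
  refine ⟨F1 ∪ F2, v1, fun f hf => (Finset.mem_union.1 hf).elim (n1 f) (n2 f),
    fun s hs hkl H => ?_⟩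
  rcases hkl with hk | hl
  · exact h1 s hs (Or.inl hk) fun f hf => H f (Finset.mem_union_left _ hf)
  · rw [hv]
    exact h2 s hs (Or.inl hl) fun f hf => H f (Finset.mem_union_right _ hf)

lemma not_gc [Infinite α] (m : ℕ) (l : ℚ) (h : l ≠ m) : ¬ GC (m : ℚ) l (aElem m : Set (α → ℚ)) := by
  rintro ⟨F, v, n, H⟩
  obtain ⟨s, hs, hm, hF⟩ := exists_generic_s2 (m : ℚ) F n
  obtain ⟨s', hs', hm', hF'⟩ := exists_generic_s2 l F n
  have h1 := (H s hs (Or.inl hm) hF).1 ⟨hs, hm.symm⟩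
  have h2 := (H s' hs' (Or.inr hm') hF').2 h1
  apply h
  rw [← hm']
  exact h2.2.symm

/-- dependence on finitely many coordinates and on the weight -/
def Loc (Γ : Finset α) (y : Set (α → ℚ)) : Prop :=
  ∀ s ∈ W α, ∀ s' ∈ W α, (∀ i ∈ Γ, s i = s' i) → L (fun _ => 1) s = L (fun _ => 1) s' →
    (s ∈ y → s' ∈ y)

lemma loc_Sg {y : Set (α → ℚ)} (hy : SgMem {aElem 0, aElem 1} y) : ∃ Γ, Loc Γ y := by
  induction hy with
  | base h =>
    refine ⟨∅, fun s hs s' hs' _ hL h' => ?_⟩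
    rcases h with rfl | rfl
    · exact ⟨hs', h'.2.trans hL⟩
    · exact ⟨hs', h'.2.trans hL⟩
  | empty => exact ⟨∅, fun s _ s' _ _ _ h => h⟩
  | top => exact ⟨∅, fun s _ s' hs' _ _ _ => hs'⟩
  | dgnl i j =>
    refine ⟨{i, j}, fun s hs s' hs' H _ h => ⟨hs', ?_⟩⟩
    rw [← H i (by simp), ← H j (by simp)]
    exact h.2
  | union _ _ ih1 ih2 =>
    obtain ⟨F1, h1⟩ := ih1
    obtain ⟨F2, h2⟩ := ih2
    exact ⟨F1 ∪ F2, fun s hs s' hs' H hL h => h.imp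
      (h1 s hs s' hs' (fun i hi => H i (Finset.mem_union_left _ hi)) hL)
      (h2 s hs s' hs' (fun i hi => H i (Finset.mem_union_right _ hi)) hL)⟩
  | compl _ ih =>
    obtain ⟨F, h⟩ := ih
    exact ⟨F, fun s hs s' hs' H hL hh => ⟨hs', fun h' =>
      hh.2 (h s' hs' s hs (fun i hi => (H i hi).symm) hL.symm h')⟩⟩
  | cylin i _ ih =>
    obtain ⟨F, h⟩ := ih
    refine ⟨insert i F, fun s hs s' hs' H hL hh => ?_⟩
    obtain ⟨-, t, hty, ht⟩ := hh
    have ht' : t = Function.update s i (t i) := by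
      ext j
      by_cases hj : j = i
      · subst hj; simp
      · simp [Function.update_of_ne hj, ht j hj]
    refine ⟨hs', Function.update s' i (t i), ?_, fun j hj => Function.update_of_ne hj _ _⟩
    rw [ht'] at hty
    refine h _ (W_update hs _ _) _ (W_update hs' _ _) (fun j hj => ?_) ?_ hty
    · by_cases hji : j = i
      · subst hji; simp
      · rw [Function.update_of_ne hji, Function.update_of_ne hji]
        exact H j (Finset.mem_insert_of_mem hj)
    · rw [L_update hs, L_update hs', hL, H i (Finset.mem_insert_self _ _)]
  | subst i j _ ih =>
    obtain ⟨F, h⟩ := ih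
    refine ⟨F.image (Equiv.swap i j), fun s hs s' hs' H hL hh => ⟨hs', ?_⟩⟩
    refine h _ (W_swap hs i j) _ (W_swap hs' i j) (fun k hk => ?_) ?_ hh.2
    · exact H _ (Finset.mem_image_of_mem _ hk)
    · rw [L_swap, L_swap]; exact hL

lemma Sg_sub_W {y : Set (α → ℚ)} (hy : SgMem {aElem 0, aElem 1} y) : y ⊆ W α := by
  induction hy with
  | base h => rcases h with rfl | rfl <;> exact fun s hs => hs.1
  | empty => exact Set.empty_subset _
  | top => exact subset_rfl
  | dgnl i j => exact fun s hs => hs.1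
  | union _ _ ih1 ih2 => exact Set.union_subset ih1 ih2
  | compl _ _ => exact fun s hs => hs.1
  | cylin i _ _ => exact fun s hs => hs.1
  | subst i j _ _ => exact fun s hs => hs.1

lemma cyl_many {B I : Set (Set (α → ℚ))} (hI : IsIdeal B I) {x : Set (α → ℚ)} (hx : x ∈ I)
    (Γ : Finset α) : ∃ z ∈ I, ∀ s ∈ W α, (∃ t ∈ x, ∀ j ∉ Γ, t j = s j) → s ∈ z := by
  induction Γ using Finset.induction_on with
  | empty =>
    refine ⟨x, hx, fun s _ ⟨t, ht, h⟩ => ?_⟩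
    have : t = s := by ext j; exact h j (by simp)
    exact this ▸ ht
  | insert i Γ _ ih =>
    obtain ⟨z, hz, h⟩ := ih
    refine ⟨cyl i z, hI.2.2.2.2.1 z hz i, fun s hs ⟨t, ht, hts⟩ => ?_⟩
    refine ⟨hs, Function.update s i (t i), h _ (W_update hs _ _) ⟨t, ht, fun j hj => ?_⟩,
      fun j hj => Function.update_of_ne hj _ _⟩
    by_cases hji : j = i
    · subst hji; simp
    · rw [Function.update_of_ne hji]
      exact hts j (by simp [hji, hj])

lemma simple_A [Infinite α] : Simple (Sg {aElem 0, aElem 1} : Set (Set (α → ℚ))) := by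
  intro I hI
  by_cases hne : ∃ x ∈ I, x.Nonempty
  · right
    obtain ⟨x, hx, u, hu⟩ := hne
    have hxB : SgMem {aElem 0, aElem 1} x := hI.2.1 hx
    obtain ⟨Γ, hΓ⟩ := loc_Sg hxB
    obtain ⟨k, hk⟩ := Infinite.exists_notMem_finset Γ
    obtain ⟨z, hz, h⟩ := cyl_many hI hx (insert k Γ)
    have huW := Sg_sub_W hxB hu
    have hWz : W α ⊆ z := by
      intro s hs
      apply h s hs
      let t0 : α → ℚ := fun j => if j ∈ Γ then u j else s j
      have ht0 : t0 ∈ W α := by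
        refine Set.Finite.subset (Set.Finite.union huW hs) ?_
        intro j hj
        by_cases hjΓ : j ∈ Γ
        · left; simpa [t0, hjΓ] using hj
        · right; simpa [t0, hjΓ] using hj
      refine ⟨Function.update t0 k (t0 k + (L (fun _ => 1) u - L (fun _ => 1) t0)), ?_, ?_⟩
      · refine hΓ u huW _ (W_update ht0 _ _) (fun i hi => ?_) ?_ hu
        · have : i ≠ k := by rintro rfl; exact hk hi
          rw [Function.update_of_ne this]
          simp [t0, hi]
        · rw [L_update ht0]; ring
      · intro j hj
        simp only [Finset.mem_insert, not_or] at hj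
        rw [Function.update_of_ne hj.1]
        simp [t0, hj.2]
    refine Set.Subset.antisymm hI.2.1 fun y hy => ?_
    exact hI.2.2.1 z hz y hy ((Sg_sub_W hy).trans hWz)
  · left
    push Not at hne
    obtain ⟨x, hx⟩ := hI.1
    ext y
    constructor
    · intro hy; exact hne y hy
    · intro hy
      rw [Set.mem_singleton_iff.1 hy, ← hne x hx]
      exact hx

end QPEA

open QPEA

/-- The subalgebra `A_1` of `C` generated by the two elements `a_0, a_1`
is a simple quasi-polyadic equality set algebra (of infinite dimension) which is
generated by two elements but not by any single element. -/
theorem stmt2 {α : Type*} [Infinite α] :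
    Simple (Sg {aElem 0, aElem 1} : Set (Set (α → ℚ))) ∧
    ∀ x ∈ (Sg {aElem 0, aElem 1} : Set (Set (α → ℚ))),
      Sg {x} ≠ (Sg {aElem 0, aElem 1} : Set (Set (α → ℚ))) := by
  refine ⟨simple_A, fun x hx heq => ?_⟩
  have hdet : ∀ y, SgMem {aElem 0, aElem 1} y → ∃ F, Det F (y : Set (α → ℚ)) := by
    intro y hy
    refine det_Sg ?_ hy
    rintro z (rfl | rfl) <;> exact ⟨_, det_poly _ _⟩
  have h0 : SgMem {x} (aElem 0) := by
    have : aElem 0 ∈ Sg {x} := by rw [heq]; exact SgMem.base (by simp)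
    exact this
  have h1 : SgMem {x} (aElem 1) := by
    have : aElem 1 ∈ Sg {x} := by rw [heq]; exact SgMem.base (by simp)
    exact this
  have hdet' : ∀ y, SgMem {x} y → ∃ F, Det F y := by
    intro y hy
    have : y ∈ Sg {x} := hy
    rw [heq] at this
    exact hdet y this
  obtain ⟨F, hF⟩ := hdet x hx
  obtain ⟨F0, v0, n0, g0⟩ := gc_of_det (k := 0) (l := 0) hF (Or.inl rfl)
  obtain ⟨F1, v1, n1, g1⟩ := gc_of_det (k := 1) (l := 1) hF (Or.inl rfl)
  obtain ⟨F2, v2, n2, g2⟩ := gc_of_det (k := 2) (l := 2) hF (Or.inl rfl)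
  have hp : (v0 ↔ v1) ∨ (v0 ↔ v2) ∨ (v1 ↔ v2) := by tauto
  rcases hp with hp | hp | hp
  · exact not_gc 0 1 (by norm_num) (by simpa using gc_Sg (gc_merge n0 n1 hp g0 g1) hdet' h0)
  · exact not_gc 0 2 (by norm_num) (by simpa using gc_Sg (gc_merge n0 n2 hp g0 g2) hdet' h0)
  · exact not_gc 1 2 (by norm_num) (by simpa using gc_Sg (gc_merge n1 n2 hp g1 g2) hdet' h1)
end

section
/- For every subset Y of Pof: G(Y) ∩ Pof = Y^S, and G(Y) ∩ Pof** = (Y^S)**. -/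
/- Formalization of quasi-polyadic equality set algebras over the weak space
   `V = {s : α → ℚ | s i ≠ 0 for finitely many i}`, where the infinite ordinal α
   is formalized as an infinite type. -/

open scoped Classical

open QPEA

namespace QPEA

lemma nz_fin {α : Type*} (r : α → ℚ) {s : α → ℚ} (hs : s ∈ W α) :
    (Function.support (fun i => r i * s i)).Finite := by
  refine Set.Finite.subset hs ?_
  intro i hi
  simp only [Function.mem_support] at hi
  exact right_ne_zero_of_mul hi

lemma single_W {α : Type*} (i : α) (q : ℚ) : (Pi.single i q : α → ℚ) ∈ W α := by
  refine Set.Finite.subset (Set.finite_singleton i) ?_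
  intro j hj
  by_contra h
  have h2 : j ≠ i := h
  exact hj (by simp [h2])

lemma add_W {α : Type*} {s t : α → ℚ} (hs : s ∈ W α) (ht : t ∈ W α) : s + t ∈ W α := by
  refine Set.Finite.subset (Set.Finite.union hs ht) ?_
  intro j hj
  by_contra h
  simp only [Set.mem_union, Set.mem_setOf_eq, not_or, not_not] at h
  apply hj
  simp [h.1, h.2]

lemma S_add {α : Type*} (r : α → ℚ) {s t : α → ℚ} (hs : s ∈ W α) (ht : t ∈ W α) :
    ∑ᶠ i, r i * (s + t) i = (∑ᶠ i, r i * s i) + ∑ᶠ i, r i * t i := by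
  rw [← finsum_add_distrib (nz_fin r hs) (nz_fin r ht)]
  simp only [Pi.add_apply, mul_add]

lemma S_single {α : Type*} (r : α → ℚ) (i : α) (q : ℚ) :
    ∑ᶠ j, r j * (Pi.single i q : α → ℚ) j = r i * q := by
  rw [finsum_eq_single _ i]
  · simp
  · intro j hj
    simp [Pi.single_eq_of_ne hj]

def Bad {α : Type*} (y : Set (α → ℚ)) : Prop :=
  ∃ (t : ℚ) (r : α → ℚ) (i j : α), r i ≠ r j ∧ y = poly t r

lemma avoid {α : Type*} [Infinite α] (t : ℚ) (B : Set (Set (α → ℚ))) (hB : B.Finite) :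
    (∀ y ∈ B, Bad y) → ∃ s ∈ W α, (∑ᶠ i, (1:ℚ) * s i) = t ∧ ∀ y ∈ B, s ∉ y := by
  induction B, hB using Set.Finite.induction_on with
  | empty =>
    intro _
    obtain ⟨i⟩ : Nonempty α := inferInstance
    refine ⟨Pi.single i t, single_W i t, ?_, by simp⟩
    rw [S_single (fun _ => 1)]; simp
  | @insert y B _ hfin ih =>
    intro h
    obtain ⟨s, hs, hst, hav⟩ := ih (fun z hz => h z (Set.mem_insert_of_mem _ hz))
    obtain ⟨t0, r0, i, j, hij, rfl⟩ := h y (Set.mem_insert _ _)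
    let f : ℚ → (α → ℚ) := fun q => s + (Pi.single i q + Pi.single j (-q))
    have hfW : ∀ q, f q ∈ W α := fun q => add_W hs (add_W (single_W _ _) (single_W _ _))
    have hfS : ∀ q (r : α → ℚ), ∑ᶠ k, r k * f q k = (∑ᶠ k, r k * s k) + q * (r i - r j) := by
      intro q r
      rw [S_add r hs (add_W (single_W _ _) (single_W _ _)),
        S_add r (single_W _ _) (single_W _ _), S_single, S_single]
      ring
    have key : ∀ z ∈ insert (poly t0 r0) B, {q | f q ∈ z}.Finite := by
      intro z hz
      obtain ⟨t1, r1, i1, j1, -, rfl⟩ := h z hz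
      by_cases hr : r1 i = r1 j
      · have : {q | f q ∈ poly t1 r1} = ∅ ∨ s ∈ poly t1 r1 := by
          by_cases hsz : s ∈ poly t1 r1
          · exact Or.inr hsz
          · left
            ext q
            simp only [Set.mem_setOf_eq, Set.mem_empty_iff_false, iff_false]
            intro hq
            apply hsz
            refine ⟨hs, ?_⟩
            rw [hq.2, hfS, hr]; ring
        rcases this with h1 | h1
        · rw [h1]; exact Set.finite_empty
        · rcases hz with hz | hz
          · refine Set.Subsingleton.finite ?_
            intro a ha b hb
            have ha' : f a ∈ poly t1 r1 := ha
            have hb' : f b ∈ poly t1 r1 := hb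
            rw [hz] at ha' hb'
            have h2 := ha'.2.symm.trans hb'.2
            rw [hfS, hfS] at h2
            exact mul_right_cancel₀ (sub_ne_zero.2 hij) (add_left_cancel h2)
          · exact absurd h1 (hav _ hz)
      · refine Set.Subsingleton.finite ?_
        intro a ha b hb
        have h2 := ha.2.symm.trans hb.2
        rw [hfS, hfS] at h2
        exact mul_right_cancel₀ (sub_ne_zero.2 hr) (add_left_cancel h2)
    have hall : (⋃ z ∈ insert (poly t0 r0) B, {q | f q ∈ z}).Finite :=
      Set.Finite.biUnion (hfin.insert _) key
    obtain ⟨q, hq⟩ := hall.infinite_compl.nonempty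
    refine ⟨f q, hfW q, ?_, ?_⟩
    · rw [hfS q (fun _ => 1), hst]; ring
    · intro z hz hqz
      apply hq
      simp only [Set.mem_iUnion]
      exact ⟨z, hz, hqz⟩

lemma Po_cases {α : Type*} [Infinite α] {y : Set (α → ℚ)} (hy : y ∈ Po α) :
    Bad y ∨ y = ∅ ∨ y = W α := by
  rcases hy with ⟨t, r, -, ⟨i, hi⟩, rfl⟩ | ⟨i, j, hij, rfl⟩
  · by_cases h : ∃ j, r j ≠ 0
    · obtain ⟨j, hj⟩ := h
      exact Or.inl ⟨t, r, j, i, by rw [hi]; exact hj, rfl⟩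
    · push Not at h
      right
      by_cases ht : t = 0
      · right
        ext s
        simp [poly, h, ht]
      · left
        ext s
        simp [poly, h, ht]
  · left
    refine ⟨0, Pi.single i 1 + Pi.single j (-1), i, j, ?_, ?_⟩
    · simp [hij, hij.symm]; norm_num
    · ext s
      have : s ∈ W α → ∑ᶠ k, (Pi.single i 1 + Pi.single j (-1) : α → ℚ) k * s k = s i - s j := by
        intro hs
        have h1 := S_add s (single_W i 1) (single_W j (-1))
        rw [S_single, S_single] at h1
        rw [finsum_congr (fun k => mul_comm _ (s k)), h1]; ring
      constructor
      · rintro ⟨h1, h2⟩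
        exact ⟨h1, by rw [this h1, h2]; ring⟩
      · rintro ⟨h1, h2⟩
        exact ⟨h1, by rw [this h1] at h2; linarith⟩

lemma dstar_fin {α : Type*} {X : Set (Set (α → ℚ))} {x : Set (α → ℚ)} (hx : x ∈ dstar X) :
    x ⊆ W α ∧ ∃ X0 ⊆ X, X0.Finite ∧ ∀ s ∈ W α, ∀ s' ∈ W α,
      (∀ y ∈ X0, (s ∈ y ↔ s' ∈ y)) → (s ∈ x ↔ s' ∈ x) := by
  obtain ⟨n, f, hf, rfl⟩ := hx
  have hst : ∀ i, f i ⊆ W α ∧ ∃ X0 ⊆ X, X0.Finite ∧ ∀ s ∈ W α, ∀ s' ∈ W α,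
      (∀ y ∈ X0, (s ∈ y ↔ s' ∈ y)) → (s ∈ f i ↔ s' ∈ f i) := by
    intro i
    obtain ⟨m, g, hg, hgi⟩ := hf i
    rw [hgi]
    refine ⟨Set.inter_subset_left, ?_⟩
    have : ∀ k, ∃ q ∈ X, g k = q ∨ g k = W α \ q := by
      intro k
      rcases hg k with h | ⟨q, hq, h⟩
      · exact ⟨_, h, Or.inl rfl⟩
      · exact ⟨q, hq, Or.inr h⟩
    choose q hq hgq using this
    refine ⟨Set.range q, ?_, Set.finite_range q, ?_⟩
    · rintro _ ⟨k, rfl⟩; exact hq k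
    · intro s hs s' hs' h
      simp only [Set.mem_inter_iff, hs, hs', true_and, Set.mem_iInter]
      refine forall_congr' fun k => ?_
      have := h (q k) ⟨k, rfl⟩
      rcases hgq k with h1 | h1 <;> rw [h1]
      · exact this
      · simp only [Set.mem_diff, hs, hs', true_and, this]
  choose hW X0 hX0 hfin hagree using hst
  refine ⟨Set.iUnion_subset hW, ⋃ i, X0 i, Set.iUnion_subset hX0, Set.finite_iUnion hfin, ?_⟩
  intro s hs s' hs' h
  simp only [Set.mem_iUnion]
  refine exists_congr fun i => hagree i s hs s' hs' fun y hy => h y ?_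
  exact Set.mem_iUnion.2 ⟨i, hy⟩

lemma poly_inj {α : Type*} [Infinite α] :
    Function.Injective (fun t : ℚ => (poly t (fun _ => 1) : Set (α → ℚ))) := by
  intro a b h
  obtain ⟨s, hs, hst, -⟩ := avoid (α := α) a ∅ Set.finite_empty (by simp)
  have : s ∈ poly a (fun _ => 1) := ⟨hs, hst.symm⟩
  have h' : (poly a (fun _ => 1) : Set (α → ℚ)) = poly b (fun _ => 1) := h
  rw [h'] at this
  rw [this.2, hst]

lemma main {α : Type*} [Infinite α] {Y : Set (Set (α → ℚ))} (hY : Y ⊆ Pof α)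
    {x : Set (α → ℚ)} (hx : x ∈ dstar (Y ∪ Po α))
    (hsat : ∀ s ∈ W α, ∀ s' ∈ W α, (∑ᶠ i, (1:ℚ) * s i) = (∑ᶠ i, (1:ℚ) * s' i) →
      (s ∈ x ↔ s' ∈ x)) :
    ∃ T : Set ℚ, T.Finite ∧ (∀ t ∈ T, poly t (fun _ => 1) ∈ Y) ∧
      ((∀ s ∈ x, (∑ᶠ i, (1:ℚ) * s i) ∈ T) ∨ (∀ s ∈ W α \ x, (∑ᶠ i, (1:ℚ) * s i) ∈ T)) := by
  obtain ⟨hxW, X0, hX0, hfin, hag⟩ := dstar_fin hx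
  refine ⟨{t | poly t (fun _ => 1) ∈ X0 ∩ Y},
    Set.Finite.preimage poly_inj.injOn (hfin.inter_of_left Y), fun t ht => ht.2, ?_⟩
  by_contra hcon
  push Not at hcon
  obtain ⟨⟨s, hs, hsT⟩, ⟨s', hs', hsT'⟩⟩ := hcon
  have hB : {y ∈ X0 | Bad y}.Finite := hfin.subset (Set.sep_subset _ _)
  obtain ⟨u, hu, hus, hub⟩ := avoid (∑ᶠ i, (1:ℚ) * s i) _ hB (fun y hy => hy.2)
  obtain ⟨v, hv, hvs, hvb⟩ := avoid (∑ᶠ i, (1:ℚ) * s' i) _ hB (fun y hy => hy.2)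
  have h1 := hsat u hu s (hxW hs) hus
  have h2 := hsat v hv s' hs'.1 hvs
  have h3 := hag u hu v hv (by
    intro y hy
    by_cases hb : Bad y
    · exact iff_of_false (hub y ⟨hy, hb⟩) (hvb y ⟨hy, hb⟩)
    rcases hX0 hy with hyY | hyP
    · obtain ⟨t, rfl⟩ := hY hyY
      refine iff_of_false ?_ ?_
      · intro h
        apply hsT
        rw [← hus, ← h.2]
        exact ⟨hy, hyY⟩
      · intro h
        apply hsT'
        rw [← hvs, ← h.2]
        exact ⟨hy, hyY⟩
    · rcases Po_cases hyP with h | h | h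
      · exact absurd h hb
      · rw [h]; exact Iff.rfl
      · rw [h]; exact iff_of_true hu hv)
  exact hs'.2 (h2.1 (h3.1 (h1.2 hs)))

lemma star_mono {α : Type*} {X X' : Set (Set (α → ℚ))} (h : X ⊆ X') : star X ⊆ star X' := by
  rintro _ ⟨n, f, hf, rfl⟩
  refine ⟨n, f, fun i => ?_, rfl⟩
  rcases hf i with h1 | ⟨q, hq, h1⟩
  · exact Or.inl (h h1)
  · exact Or.inr ⟨q, h hq, h1⟩

lemma dstar_mono {α : Type*} {X X' : Set (Set (α → ℚ))} (h : X ⊆ X') : dstar X ⊆ dstar X' := by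
  rintro _ ⟨n, f, hf, rfl⟩
  exact ⟨n, f, fun i => star_mono h (hf i), rfl⟩

lemma poly_mem_star {α : Type*} {X : Set (Set (α → ℚ))} {t : ℚ} {r : α → ℚ}
    (h : poly t r ∈ X) : poly t r ∈ star X := by
  refine ⟨1, fun _ => poly t r, fun _ => Or.inl h, ?_⟩
  rw [Set.iInter_const, Set.inter_eq_right.2]
  exact fun s hs => hs.1

lemma star_dstar {α : Type*} {X : Set (Set (α → ℚ))} {x : Set (α → ℚ)}
    (h : x ∈ star X) : x ∈ dstar X :=
  ⟨1, fun _ => x, fun _ => h, by rw [Set.iUnion_const]⟩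

lemma sClose_eq {α : Type*} [Infinite α] {Y : Set (Set (α → ℚ))} (hY : Y ⊆ Pof α) :
    sClose Y = Y := by
  have key : ∀ (t : ℚ) (i j : α), sub i j (poly t (fun _ => 1)) = poly t (fun _ => 1) := by
    intro t i j
    ext s
    have h1 : s ∈ W α → s ∘ Equiv.swap i j ∈ W α := by
      intro hs
      exact Set.Finite.preimage (Equiv.swap i j).injective.injOn hs
    have h2 : ∑ᶠ k, (1:ℚ) * (s ∘ Equiv.swap i j) k = ∑ᶠ k, (1:ℚ) * s k :=
      finsum_comp_equiv (Equiv.swap i j) (f := fun k => (1:ℚ) * s k)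
    constructor
    · rintro ⟨hs, -, h⟩
      exact ⟨hs, h.trans h2⟩
    · rintro ⟨hs, h⟩
      exact ⟨hs, h1 hs, h.trans h2.symm⟩
  ext y
  constructor
  · rintro ⟨x, hx, i, j, rfl⟩
    obtain ⟨t, rfl⟩ := hY hx
    rwa [key]
  · intro hy
    obtain ⟨i⟩ : Nonempty α := inferInstance
    refine ⟨y, hy, i, i, ?_⟩
    obtain ⟨t, rfl⟩ := hY hy
    rw [key]

lemma Pof_sat {α : Type*} {x : Set (α → ℚ)} (hx : x ∈ dstar (Pof α)) :
    ∀ s ∈ W α, ∀ s' ∈ W α, (∑ᶠ i, (1:ℚ) * s i) = (∑ᶠ i, (1:ℚ) * s' i) →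
      (s ∈ x ↔ s' ∈ x) := by
  obtain ⟨hxW, X0, hX0, hfin, hag⟩ := dstar_fin hx
  intro s hs s' hs' h
  refine hag s hs s' hs' fun y hy => ?_
  obtain ⟨t, rfl⟩ := hX0 hy
  exact ⟨fun h1 => ⟨hs', h1.2.trans h⟩, fun h1 => ⟨hs, h1.2.trans h.symm⟩⟩

lemma Pof_sub {α : Type*} {X : Set (Set (α → ℚ))} (hX : X ⊆ Pof α) : X ⊆ dstar X := by
  intro x hx
  obtain ⟨t, rfl⟩ := hX hx
  exact star_dstar (poly_mem_star hx)

end QPEA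

/-- For every subset `Y` of `Pof`: `G(Y) ∩ Pof = Y^S` and
`G(Y) ∩ Pof** = (Y^S)**`. -/
theorem stmt7 {α : Type*} [Infinite α] (Y : Set (Set (α → ℚ))) (hY : Y ⊆ Pof α) :
    G Y ∩ Pof α = sClose Y ∧ G Y ∩ dstar (Pof α) = dstar (sClose Y) := by
  unfold G
  rw [sClose_eq hY]
  constructor
  · apply Set.Subset.antisymm
    · rintro x ⟨hx, hP⟩
      have hsat := Pof_sat (Pof_sub (fun _ h => h) hP)
      obtain ⟨T, hT, hTY, h⟩ := main hY hx hsat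
      obtain ⟨t, rfl⟩ := hP
      rcases h with h | h
      · obtain ⟨s, hs, hst, -⟩ := avoid (α := α) t ∅ Set.finite_empty (by simp)
        have := h s ⟨hs, hst.symm⟩
        rw [hst] at this
        exact hTY t this
      · exfalso
        obtain ⟨q, hq⟩ := (hT.insert t).infinite_compl.nonempty
        obtain ⟨s, hs, hst, -⟩ := avoid (α := α) q ∅ Set.finite_empty (by simp)
        have hqt : ¬ (q = t ∨ q ∈ T) := hq
        have := h s ⟨hs, fun h' => hqt (Or.inl (hst.symm.trans h'.2.symm))⟩
        rw [hst] at this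
        exact hqt (Or.inr this)
    · intro x hx
      exact ⟨dstar_mono Set.subset_union_left (Pof_sub hY hx), hY hx⟩
  · apply Set.Subset.antisymm
    · rintro x ⟨hx, hP⟩
      have hsat := Pof_sat hP
      have hxW := (dstar_fin hx).1
      obtain ⟨T, hT, hTY, h⟩ := main hY hx hsat
      rcases h with h | h
      · have hT' : (T ∩ {t | poly t (fun _ => 1) ⊆ x}).Finite := hT.inter_of_left _
        obtain ⟨n, f, -, hf⟩ := hT'.fin_param
        refine ⟨n, fun k => poly (f k) (fun _ => 1), fun k => poly_mem_star (hTY _ ?_), ?_⟩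
        · have : f k ∈ Set.range f := ⟨k, rfl⟩
          rw [hf] at this
          exact this.1
        · ext s
          simp only [Set.mem_iUnion]
          constructor
          · intro hs
            have : (∑ᶠ i, (1:ℚ) * s i) ∈ T ∩ {t | poly t (fun _ => 1) ⊆ x} :=
              ⟨h s hs, fun s' hs' => (hsat s (hxW hs) s' hs'.1 hs'.2).1 hs⟩
            rw [← hf] at this
            obtain ⟨k, hk⟩ := this
            exact ⟨k, hxW hs, hk⟩
          · rintro ⟨k, hk⟩
            have : f k ∈ Set.range f := ⟨k, rfl⟩
            rw [hf] at this
            exact this.2 hk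
      · have hT' : (T ∩ {t | poly t (fun _ => 1) ⊆ W α \ x}).Finite := hT.inter_of_left _
        obtain ⟨n, f, -, hf⟩ := hT'.fin_param
        apply star_dstar
        refine ⟨n, fun k => W α \ poly (f k) (fun _ => 1),
          fun k => Or.inr ⟨_, hTY (f k) ?_, rfl⟩, ?_⟩
        · have : f k ∈ Set.range f := ⟨k, rfl⟩
          rw [hf] at this
          exact this.1
        · ext s
          simp only [Set.mem_inter_iff, Set.mem_iInter]
          constructor
          · intro hs
            refine ⟨hxW hs, fun k => ⟨hxW hs, fun hk => ?_⟩⟩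
            have : f k ∈ Set.range f := ⟨k, rfl⟩
            rw [hf] at this
            exact (this.2 hk).2 hs
          · rintro ⟨hsW, hk⟩
            by_contra hs
            have : (∑ᶠ i, (1:ℚ) * s i) ∈ T ∩ {t | poly t (fun _ => 1) ⊆ W α \ x} :=
              ⟨h s ⟨hsW, hs⟩, fun s' hs' =>
                ⟨hs'.1, fun h' => hs ((hsat s hsW s' hs'.1 hs'.2).2 h')⟩⟩
            rw [← hf] at this
            obtain ⟨k, hk'⟩ := this
            exact (hk k).2 ⟨hsW, hk'⟩
    · intro x hx
      exact ⟨dstar_mono Set.subset_union_left hx, dstar_mono hY hx⟩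
end

section
/- Let β be an ordinal, U a set with at least two elements, and k, l < β with k ≠ l. Let X, Y ⊆ ^βU (the set of all functions from β to U) satisfy c_k X = X and c_k Y = Y, where c_k Z = {s ∈ ^βU : ∃t ∈ Z with t_j = s_j for all j ≠ k}, and let d_kl = {s ∈ ^βU : s_k = s_l}. Put b = (X ∩ d_kl) ∪ (Y ∖ d_kl). Then c_k(b ∩ d_kl) = X and c_k(b ∖ d_kl) = Y. -/
/-- Cylindrification on coordinate `k`, on the full function space `^βU`. -/
def cylK {β U : Type*} (k : β) (Z : Set (β → U)) : Set (β → U) :=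
  {s | ∃ t ∈ Z, ∀ j, j ≠ k → t j = s j}

/-- The diagonal `d_kl = {s ∈ ^βU | s k = s l}`. -/
def dEq {β U : Type*} (k l : β) : Set (β → U) := {s : β → U | s k = s l}

/-- Let `U` have at least two elements, `k ≠ l`, and `X, Y ⊆ ^βU`
with `c_k X = X` and `c_k Y = Y`.  Put `b = (X ∩ d_kl) ∪ (Y ∖ d_kl)`.  Then
`c_k (b ∩ d_kl) = X` and `c_k (b ∖ d_kl) = Y`. -/
theorem stmt13 {β U : Type*} [Nontrivial U] (k l : β) (hkl : k ≠ l)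
    (X Y : Set (β → U)) (hX : cylK k X = X) (hY : cylK k Y = Y) :
    cylK k (((X ∩ dEq k l) ∪ (Y \ dEq k l)) ∩ dEq k l) = X ∧
    cylK k (((X ∩ dEq k l) ∪ (Y \ dEq k l)) \ dEq k l) = Y := by
  classical
  have key : ∀ Z : Set (β → U), cylK k Z = Z → ∀ s t : β → U, t ∈ Z →
      (∀ j, j ≠ k → t j = s j) → s ∈ Z := by
    intro Z hZ s t ht h
    rw [← hZ]
    exact ⟨t, ht, h⟩
  have upd : ∀ (s : β → U) (u : U) (j : β), j ≠ k → Function.update s k u j = s j :=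
    fun s u j hj => Function.update_of_ne hj u s
  constructor
  · ext s
    constructor
    · rintro ⟨t, ⟨h1 | h1, h2⟩, h⟩
      · exact key X hX s t h1.1 h
      · exact absurd h2 h1.2
    · intro hs
      have hd : Function.update s k (s l) ∈ dEq k l := by
        simp [dEq, Function.update_of_ne hkl.symm]
      have hx : Function.update s k (s l) ∈ X :=
        key X hX _ s hs (fun j hj => (upd s _ j hj).symm)
      exact ⟨_, ⟨Or.inl ⟨hx, hd⟩, hd⟩, upd s _⟩
  · ext s
    constructor
    · rintro ⟨t, ⟨h1 | h1, h2⟩, h⟩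
      · exact absurd h1.2 h2
      · exact key Y hY s t h1.1 h
    · intro hs
      obtain ⟨u, hu⟩ := exists_ne (s l)
      have hd : Function.update s k u ∉ dEq k l := by
        simp [dEq, Function.update_of_ne hkl.symm, hu]
      have hy : Function.update s k u ∈ Y :=
        key Y hY _ s hs (fun j hj => (upd s _ j hj).symm)
      exact ⟨_, ⟨Or.inr ⟨hy, hd⟩, hd⟩, upd s _⟩
end

section
/- Let α < β be ordinals, B a polyadic equality algebra of dimension β, and A = Nr_α B its neat α-reduct. If A generates B and A is simple, then B is simple. -/
/- Abstract polyadic equality algebras of dimension `β` (the dimension ordinal is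
   formalized as a type `β`), following the Halmos axiomatization described in the
   paper: a Boolean algebra with cylindrifications `c_(Γ)` for `Γ ⊆ β`,
   substitutions `s_τ` for `τ : β → β`, and diagonal elements `d_ij`. -/

open scoped Classical

universe u v w

/-- A polyadic equality algebra of dimension `β` (`PEA_β`). -/
class PEA (β : Type u) (A : Type v) extends BooleanAlgebra A where
  cyl : Set β → A → A
  sub : (β → β) → A → A
  diag : β → β → A
  cyl_bot : ∀ Γ : Set β, cyl Γ ⊥ = ⊥
  le_cyl : ∀ (Γ : Set β) (x : A), x ≤ cyl Γ x
  cyl_inf : ∀ (Γ : Set β) (x y : A), cyl Γ (x ⊓ cyl Γ y) = cyl Γ x ⊓ cyl Γ y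
  cyl_cyl : ∀ (Γ Δ : Set β) (x : A), cyl Γ (cyl Δ x) = cyl (Γ ∪ Δ) x
  sub_id : ∀ x : A, sub id x = x
  sub_comp : ∀ (σ τ : β → β) (x : A), sub σ (sub τ x) = sub (σ ∘ τ) x
  sub_sup : ∀ (σ : β → β) (x y : A), sub σ (x ⊔ y) = sub σ x ⊔ sub σ y
  sub_compl : ∀ (σ : β → β) (x : A), sub σ xᶜ = (sub σ x)ᶜ
  sub_cyl_congr : ∀ (σ τ : β → β) (Γ : Set β) (x : A),
    (∀ i ∉ Γ, σ i = τ i) → sub σ (cyl Γ x) = sub τ (cyl Γ x)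
  cyl_sub : ∀ (τ : β → β) (Γ : Set β) (x : A),
    Set.InjOn τ (τ ⁻¹' Γ) → cyl Γ (sub τ x) = sub τ (cyl (τ ⁻¹' Γ) x)
  diag_refl : ∀ i : β, diag i i = ⊤
  sub_diag : ∀ (τ : β → β) (i j : β), sub τ (diag i j) = diag (τ i) (τ j)
  inf_diag_le : ∀ (i j : β) (x : A),
    x ⊓ diag i j ≤ sub (fun k => if k = i then j else k) x

namespace PEA

/-- The universe of the neat `J`-reduct (`J`-compression) `Nr_J B`:
elements `a` with `c_(β∖J) a = a`. -/
def NrSet (β : Type u) (A : Type v) [PEA β A] (J : Set β) : Set A :=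
  {a : A | cyl Jᶜ a = a}

/-- The extension `τ̄ : β → β` of `τ : J → J` by the identity on `β ∖ J`. -/
noncomputable def extMap {β : Type u} (J : Set β) (τ : J → J) : β → β :=
  fun i => if h : i ∈ J then (τ ⟨i, h⟩ : β) else i

/-- An ideal of a `PEA_β`: a Boolean ideal closed under all `c_(Γ)` and all `s_τ`. -/
def IsIdeal (β : Type u) {A : Type v} [PEA β A] (I : Set A) : Prop :=
  (⊥ : A) ∈ I ∧
  (∀ x ∈ I, ∀ y : A, y ≤ x → y ∈ I) ∧
  (∀ x ∈ I, ∀ y ∈ I, x ⊔ y ∈ I) ∧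
  (∀ x ∈ I, ∀ Γ : Set β, cyl Γ x ∈ I) ∧
  (∀ x ∈ I, ∀ τ : β → β, sub τ x ∈ I)

/-- The ideal of a `PEA_β` generated by a subset `X`: the least ideal containing `X`. -/
def IdealGen (β : Type u) {A : Type v} [PEA β A] (X : Set A) : Set A :=
  ⋂₀ {I : Set A | IsIdeal β I ∧ X ⊆ I}

/-- An ideal of the neat reduct `Nr_J B` (a `PEA` of dimension `J`): a Boolean ideal
of `Nr_J B` closed under the cylindrifications `c_(Γ)` for `Γ ⊆ J` and the
substitutions `s'_τ = s_τ̄` for `τ : J → J`. -/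
def IsNrIdeal {β : Type u} {A : Type v} [PEA β A] (J : Set β) (I : Set A) : Prop :=
  I ⊆ NrSet β A J ∧ (⊥ : A) ∈ I ∧
  (∀ x ∈ I, ∀ y ∈ NrSet β A J, y ≤ x → y ∈ I) ∧
  (∀ x ∈ I, ∀ y ∈ I, x ⊔ y ∈ I) ∧
  (∀ x ∈ I, ∀ Γ : Set β, Γ ⊆ J → cyl Γ x ∈ I) ∧
  (∀ x ∈ I, ∀ τ : J → J, sub (extMap J τ) x ∈ I)

/-- A subuniverse of a `PEA_β`: contains the diagonals and is closed under the
Boolean operations, all `c_(Γ)`, and all `s_τ`. -/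
def IsSubuniv (β : Type u) {A : Type v} [PEA β A] (S : Set A) : Prop :=
  (⊥ : A) ∈ S ∧ (∀ x ∈ S, xᶜ ∈ S) ∧ (∀ x ∈ S, ∀ y ∈ S, x ⊔ y ∈ S) ∧
  (∀ i j : β, (diag i j : A) ∈ S) ∧
  (∀ x ∈ S, ∀ Γ : Set β, cyl Γ x ∈ S) ∧
  (∀ x ∈ S, ∀ τ : β → β, sub τ x ∈ S)

/-- The subuniverse of a `PEA_β` generated by `X`. -/
def SgA (β : Type u) {A : Type v} [PEA β A] (X : Set A) : Set A :=
  ⋂₀ {S : Set A | IsSubuniv β S ∧ X ⊆ S}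

/-- A `PEA_β` is simple: it is nontrivial and its only ideals are `{⊥}` and the
whole algebra (equivalently, it has exactly two congruences). -/
def Simple (β : Type u) (A : Type v) [PEA β A] : Prop :=
  (⊥ : A) ≠ ⊤ ∧ ∀ I : Set A, IsIdeal β I → I = {⊥} ∨ I = Set.univ

/-- The neat reduct `Nr_J B` is simple: it is nontrivial and its only ideals are
`{⊥}` and all of `Nr_J B`. -/
def NrSimple {β : Type u} (A : Type v) [PEA β A] (J : Set β) : Prop :=
  (⊥ : A) ≠ ⊤ ∧ ∀ I : Set A, IsNrIdeal J I → I = {⊥} ∨ I = NrSet β A J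

end PEA

open PEA

theorem nr_compl {β : Type u} {B : Type v} [PEA β B] {J : Set β} {x : B}
    (hx : x ∈ NrSet β B J) : xᶜ ∈ NrSet β B J := by
  have hx' : cyl Jᶜ x = x := hx
  change cyl Jᶜ xᶜ = xᶜ
  apply le_antisymm _ (le_cyl _ _)
  have h := cyl_inf (Jᶜ) xᶜ x
  rw [hx', compl_inf_eq_bot, cyl_bot] at h
  exact le_compl_iff_disjoint_right.2 (disjoint_iff.2 h.symm)

theorem nr_inf {β : Type u} {B : Type v} [PEA β B] {J : Set β} {x y : B}
    (hx : x ∈ NrSet β B J) (hy : y ∈ NrSet β B J) : x ⊓ y ∈ NrSet β B J := by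
  have hx' : cyl Jᶜ x = x := hx
  have hy' : cyl Jᶜ y = y := hy
  change cyl Jᶜ (x ⊓ y) = x ⊓ y
  have h := cyl_inf (Jᶜ) x y
  rwa [hy', hx'] at h

theorem nr_sup {β : Type u} {B : Type v} [PEA β B] {J : Set β} {x y : B}
    (hx : x ∈ NrSet β B J) (hy : y ∈ NrSet β B J) : x ⊔ y ∈ NrSet β B J := by
  have h := nr_compl (nr_inf (nr_compl hx) (nr_compl hy))
  rwa [compl_inf, compl_compl, compl_compl] at h

theorem nr_cyl {β : Type u} {B : Type v} [PEA β B] {J : Set β} {x : B}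
    (hx : x ∈ NrSet β B J) (Γ : Set β) : cyl Γ x ∈ NrSet β B J := by
  have hx' : cyl Jᶜ x = x := hx
  change cyl Jᶜ (cyl Γ x) = cyl Γ x
  rw [cyl_cyl, Set.union_comm, ← cyl_cyl, hx']

theorem nr_sub {β : Type u} {B : Type v} [PEA β B] {J : Set β} {x : B}
    (hx : x ∈ NrSet β B J) (τ : J → J) : sub (extMap J τ) x ∈ NrSet β B J := by
  have hx' : cyl Jᶜ x = x := hx
  have hp : extMap J τ ⁻¹' Jᶜ = Jᶜ := by
    ext i
    by_cases h : i ∈ J <;> simp [extMap, h]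
  change cyl Jᶜ (sub (extMap J τ) x) = sub (extMap J τ) x
  rw [cyl_sub, hp, hx']
  rw [hp]
  intro i hi j hj hij
  have hi' : i ∉ J := hi
  have hj' : j ∉ J := hj
  simpa [extMap, hi', hj'] using hij

/-- Let `α < β` be ordinals (formalized: `J` a proper subset of the
dimension type `β`, playing the role of `α`), `B` a polyadic equality algebra of
dimension `β`, and `A = Nr_α B` its neat `α`-reduct.  If `A` generates `B` and `A`
is simple, then `B` is simple. -/
theorem stmt15 {β : Type u} {B : Type v} [PEA β B] (J : Set β) (hJ : J ≠ Set.univ)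
    (hgen : SgA β (NrSet β B J) = Set.univ)
    (hsimple : NrSimple B J) :
    Simple β B := by
  refine ⟨hsimple.1, fun I hI => ?_⟩
  obtain ⟨h0, hle, hsup, hcyl, hsub⟩ := hI
  have hid : IsNrIdeal J (I ∩ NrSet β B J) := by
    refine ⟨Set.inter_subset_right, ⟨h0, cyl_bot _⟩, ?_, ?_, ?_, ?_⟩
    · exact fun x hx y hy hyx => ⟨hle x hx.1 y hyx, hy⟩
    · exact fun x hx y hy => ⟨hsup x hx.1 y hy.1, nr_sup hx.2 hy.2⟩
    · exact fun x hx Γ _ => ⟨hcyl x hx.1 Γ, nr_cyl hx.2 Γ⟩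
    · exact fun x hx τ => ⟨hsub x hx.1 _, nr_sub hx.2 τ⟩
  rcases hsimple.2 _ hid with h | h
  · left
    apply Set.eq_singleton_iff_unique_mem.2 ⟨h0, fun x hx => ?_⟩
    have hm : cyl (Set.univ : Set β) x ∈ I ∩ NrSet β B J := by
      refine ⟨hcyl x hx _, ?_⟩
      change cyl Jᶜ (cyl (Set.univ : Set β) x) = _
      rw [cyl_cyl, Set.union_univ]
    rw [h] at hm
    have hm' : cyl (Set.univ : Set β) x = ⊥ := hm
    exact le_bot_iff.1 (hm' ▸ le_cyl (Set.univ : Set β) x)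
  · right
    have ht : (⊤ : B) ∈ I ∩ NrSet β B J := by
      rw [h]
      exact top_le_iff.1 (le_cyl Jᶜ (⊤ : B))
    exact Set.eq_univ_of_forall fun x => hle _ ht.1 x le_top
end

section
/- Let α < β be ordinals, B a polyadic equality algebra of dimension β, and A = Nr_α B its neat α-reduct. Then for every ideal I of B, the ideal of B generated by I ∩ A equals I. -/
/- Abstract polyadic equality algebras of dimension `β` (the dimension ordinal is
   formalized as a type `β`), following the Halmos axiomatization described in the
   paper: a Boolean algebra with cylindrifications `c_(Γ)` for `Γ ⊆ β`,
   substitutions `s_τ` for `τ : β → β`, and diagonal elements `d_ij`. -/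

open scoped Classical

universe u v w

open PEA

/-- Let `α < β` be ordinals (formalized: `J` a proper subset of the
dimension type `β`, playing the role of `α`), `B` a polyadic equality algebra of
dimension `β`, and `A = Nr_α B` its neat `α`-reduct.  Then for every ideal `I` of
`B`, the ideal of `B` generated by `I ∩ A` equals `I`. -/
theorem stmt16 {β : Type u} {B : Type v} [PEA β B] (J : Set β) (hJ : J ≠ Set.univ)
    (I : Set B) (hI : IsIdeal β I) :
    IdealGen β (I ∩ NrSet β B J) = I := by
  apply Set.Subset.antisymm
  · exact Set.sInter_subset_of_mem ⟨hI, Set.inter_subset_left⟩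
  · rintro x hx K ⟨hK, hsub⟩
    refine hK.2.1 (cyl Jᶜ x) (hsub ⟨hI.2.2.2.1 x hx Jᶜ, ?_⟩) x (le_cyl Jᶜ x)
    show cyl Jᶜ (cyl Jᶜ x) = cyl Jᶜ x
    rw [cyl_cyl, Set.union_self]
end

section
/- Let F be a field of characteristic 0 and let α be an infinite ordinal; replace ℚ by F throughout the construction. Then for every natural number n, the subalgebra A_n of C generated by {a_i : i < 2^n} (where a_m = [m·1_F, 1]) cannot be generated by n elements: for every subset X of A_n with |X| ≤ n, the subalgebra of C generated by X is not equal to A_n. -/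
/- The construction of the paper with `ℚ` replaced by an arbitrary field `F` of
   characteristic 0; the infinite ordinal `α` is formalized as an infinite type. -/

open scoped Classical

namespace QPEAF

variable {F : Type*} [Field F] {α : Type*}

/-- The weak space `V = ^αF^(0)`: functions with finite support. -/
def W (α : Type*) (F : Type*) [Field F] : Set (α → F) := {s | {i | s i ≠ 0}.Finite}

/-- Cylindrification `c_i`. -/
def cyl (i : α) (X : Set (α → F)) : Set (α → F) :=
  {s | s ∈ W α F ∧ ∃ t ∈ X, ∀ j, j ≠ i → t j = s j}

/-- Diagonal element `d_ij`. -/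
def diag (i j : α) : Set (α → F) := {s | s ∈ W α F ∧ s i = s j}

/-- Transposition substitution `s_[i,j]`. -/
noncomputable def sub (i j : α) (X : Set (α → F)) : Set (α → F) :=
  {s | s ∈ W α F ∧ (s ∘ Equiv.swap i j) ∈ X}

/-- Membership in the subalgebra of the full quasi-polyadic equality set algebra `C`
    (with unit `V = W α F`) generated by `S`. -/
inductive SgMem (S : Set (Set (α → F))) : Set (α → F) → Prop
  | base {x : Set (α → F)} : x ∈ S → SgMem S x
  | empty : SgMem S ∅
  | top : SgMem S (W α F)
  | dgnl (i j : α) : SgMem S (diag i j)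
  | union {x y : Set (α → F)} : SgMem S x → SgMem S y → SgMem S (x ∪ y)
  | compl {x : Set (α → F)} : SgMem S x → SgMem S (W α F \ x)
  | cylin (i : α) {x : Set (α → F)} : SgMem S x → SgMem S (cyl i x)
  | subst (i j : α) {x : Set (α → F)} : SgMem S x → SgMem S (sub i j x)

/-- The subalgebra `Sg^C S` of `C` generated by `S`. -/
def Sg (S : Set (Set (α → F))) : Set (Set (α → F)) := {x | SgMem S x}

/-- The element `[t, r] = {s ∈ V | t = Σ_i r_i s_i}`. -/
noncomputable def poly (t : F) (r : α → F) : Set (α → F) :=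
  {s | s ∈ W α F ∧ t = ∑ᶠ i, r i * s i}

/-- `a_m = [m·1_F, 1]` where `1` is the constantly-one sequence. -/
noncomputable def aElem (F : Type*) [Field F] {α : Type*} (m : ℕ) : Set (α → F) :=
  poly (m : F) (fun _ => 1)

end QPEAF

open QPEAF

namespace QPEAF

section Helpers

variable {F : Type*} [Field F] {α : Type*}

abbrev Aff (F : Type*) [Field F] (α : Type*) := (α →₀ F) →ᵃ[F] F

/-- membership depends only on the vanishing pattern of finitely many affine functionals -/
def Con (y : Set (α → F)) : Prop :=
  ∃ T : Finset (Aff F α), ∀ u v : α →₀ F, (∀ f ∈ T, (f u = 0 ↔ f v = 0)) →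
    ((u : α → F) ∈ y ↔ (v : α → F) ∈ y)

/-- `P` holds generically -/
def Ev (P : (α →₀ F) → Prop) : Prop :=
  ∃ T : Finset (Aff F α), ∀ u : α →₀ F, (∀ f ∈ T, f ≠ 0 → f u ≠ 0) → P u

theorem exists_avoid [CharZero F] {ι : Type*} (s : Finset ι) (a b : ι → F) :
    ∃ t : F, ∀ i ∈ s, (a i ≠ 0 ∨ b i ≠ 0) → a i + t * b i ≠ 0 := by
  obtain ⟨t, ht⟩ := Infinite.exists_notMem_finset (s.image fun i => - a i / b i)
  refine ⟨t, fun i hi h h0 => ?_⟩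
  by_cases hb : b i = 0
  · simp_all
  · apply ht
    refine Finset.mem_image.2 ⟨i, hi, ?_⟩
    rw [div_eq_iff hb]
    linear_combination -h0

theorem exists_gen [CharZero F] (T : Finset (Aff F α)) :
    ∃ u : α →₀ F, ∀ f ∈ T, f ≠ 0 → f u ≠ 0 := by
  induction T using Finset.induction_on with
  | empty => exact ⟨0, by simp⟩
  | insert f T hf ih =>
    obtain ⟨u, hu⟩ := ih
    by_cases h0 : f = 0
    · refine ⟨u, fun g hg hg0 => ?_⟩
      rcases Finset.mem_insert.1 hg with rfl | hg
      · exact absurd h0 hg0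
      · exact hu g hg hg0
    · have : ∃ w, f w ≠ 0 := by
        by_contra! hc
        exact h0 (AffineMap.ext hc)
      obtain ⟨w, hw⟩ := this
      obtain ⟨t, ht⟩ := exists_avoid (insert f T) (fun g => g u) (fun g => g w - g u)
      refine ⟨AffineMap.lineMap u w t, fun g hg hg0 => ?_⟩
      have h1 : g (AffineMap.lineMap u w t) = g u + t * (g w - g u) := by
        rw [AffineMap.apply_lineMap, AffineMap.lineMap_apply]
        simp [add_comm]
      rw [h1]
      apply ht g hg
      rcases Finset.mem_insert.1 hg with rfl | hg
      · by_cases h : g u = 0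
        · right; simpa [h] using hw
        · exact Or.inl h
      · exact Or.inl (hu g hg hg0)

theorem Ev.exists [CharZero F] {P : (α →₀ F) → Prop} (h : Ev P) : ∃ u, P u := by
  obtain ⟨T, hT⟩ := h
  obtain ⟨u, hu⟩ := exists_gen T
  exact ⟨u, hT u hu⟩

theorem Ev.mono {P Q : (α →₀ F) → Prop} (h : Ev P) (hPQ : ∀ u, P u → Q u) : Ev Q := by
  obtain ⟨T, hT⟩ := h
  exact ⟨T, fun u hu => hPQ u (hT u hu)⟩

theorem Ev.and {P Q : (α →₀ F) → Prop} (h : Ev P) (h' : Ev Q) : Ev (fun u => P u ∧ Q u) := by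
  obtain ⟨T, hT⟩ := h
  obtain ⟨T', hT'⟩ := h'
  exact ⟨T ∪ T', fun u hu => ⟨hT u fun f hf => hu f (Finset.mem_union_left _ hf),
    hT' u fun f hf => hu f (Finset.mem_union_right _ hf)⟩⟩

/-- projection along `e_i` onto the zero set of `f` -/
noncomputable def proj (f : Aff F α) (i : α) : (α →₀ F) →ᵃ[F] (α →₀ F) :=
  AffineMap.id F (α →₀ F) -
    (LinearMap.toSpanSingleton F (α →₀ F)
      ((f.linear (Finsupp.single i 1))⁻¹ • Finsupp.single i 1)).toAffineMap.comp f

theorem proj_apply (f : Aff F α) (i : α) (u : α →₀ F) :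
    proj f i u = u - (f u * (f.linear (Finsupp.single i 1))⁻¹) • Finsupp.single i 1 := by
  simp [proj, smul_smul]

theorem aff_add (f : Aff F α) (i : α) (u : α →₀ F) (t : F) :
    f (u + t • Finsupp.single i 1) = f u + t * f.linear (Finsupp.single i 1) := by
  have := f.map_vadd u (t • Finsupp.single i (1 : F))
  rw [vadd_eq_add, vadd_eq_add, add_comm] at this
  rw [this, map_smul, smul_eq_mul, add_comm]

theorem f_proj (f : Aff F α) (i : α) (h : f.linear (Finsupp.single i 1) ≠ 0) (u : α →₀ F) :
    f (proj f i u) = 0 := by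
  rw [proj_apply, sub_eq_add_neg, ← neg_smul, aff_add]
  field_simp
  ring

theorem proj_of_zero (f : Aff F α) (i : α) (u : α →₀ F) (h : f u = 0) : proj f i u = u := by
  simp [proj_apply, h]

theorem proj_line (f : Aff F α) (i : α) (h : f.linear (Finsupp.single i 1) ≠ 0) (u : α →₀ F)
    (t : F) (h0 : f (u + t • Finsupp.single i 1) = 0) :
    proj f i u = u + t • Finsupp.single i 1 := by
  rw [aff_add] at h0
  rw [proj_apply, sub_eq_add_neg, ← neg_smul]
  congr 2
  field_simp
  linear_combination -h0

theorem mem_W (u : α →₀ F) : (u : α → F) ∈ W α F := u.finite_support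

theorem exists_of_mem_W {s : α → F} (h : s ∈ W α F) : ∃ u : α →₀ F, (u : α → F) = s :=
  ⟨Finsupp.ofSupportFinite s h, rfl⟩

theorem mem_cyl {y : Set (α → F)} (hy : y ⊆ W α F) (i : α) (u : α →₀ F) :
    (u : α → F) ∈ cyl i y ↔ ∃ t : F, ((u + t • Finsupp.single i 1 : α →₀ F) : α → F) ∈ y := by
  constructor
  · rintro ⟨-, s, hs, h⟩
    refine ⟨s i - u i, ?_⟩
    convert hs using 1
    ext j
    by_cases hj : j = i
    · subst hj; simp
    · simp [h j hj, Finsupp.single_apply, Ne.symm hj]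
  · rintro ⟨t, ht⟩
    refine ⟨mem_W u, _, ht, fun j hj => ?_⟩
    simp [Finsupp.single_apply, Ne.symm hj]

theorem mem_cyl_line {y : Set (α → F)} (hy : y ⊆ W α F) (i : α) (u : α →₀ F) (r : F) :
    ((u + r • Finsupp.single i 1 : α →₀ F) : α → F) ∈ cyl i y ↔ (u : α → F) ∈ cyl i y := by
  rw [mem_cyl hy, mem_cyl hy]
  constructor
  · rintro ⟨t, ht⟩
    refine ⟨r + t, ?_⟩
    rwa [add_smul, ← add_assoc]
  · rintro ⟨t, ht⟩
    refine ⟨t - r, ?_⟩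
    rwa [add_assoc, ← add_smul, add_sub_cancel]

theorem mem_cyl_proj {y : Set (α → F)} (hy : y ⊆ W α F) (i : α) (f : Aff F α) (u : α →₀ F) :
    (proj f i u : α → F) ∈ cyl i y ↔ (u : α → F) ∈ cyl i y := by
  rw [proj_apply, sub_eq_add_neg, ← neg_smul, mem_cyl_line hy]

theorem con_cyl [CharZero F] {y : Set (α → F)} (hy : y ⊆ W α F) (i : α) (h : Con y) :
    Con (cyl i y) := by
  obtain ⟨T, hT⟩ := h
  let T' : Finset (Aff F α) := T ∪ (T ×ˢ T).image (fun p => p.1.comp (proj p.2 i))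
  let T0 := T.filter (fun f => f.linear (Finsupp.single i 1) = 0)
  refine ⟨T0 ∪ (T ×ˢ T).image (fun p => p.1.comp (proj p.2 i)), ?_⟩
  have key : ∀ u v : α →₀ F, (∀ f ∈ T0 ∪ (T ×ˢ T).image (fun p => p.1.comp (proj p.2 i)),
      (f u = 0 ↔ f v = 0)) → (u : α → F) ∈ cyl i y → (v : α → F) ∈ cyl i y := by
    intro u v huv hu
    rw [mem_cyl hy] at hu
    obtain ⟨t, ht⟩ := hu
    by_cases hg : ∃ g ∈ T, g.linear (Finsupp.single i 1) ≠ 0 ∧ g (u + t • Finsupp.single i 1) = 0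
    · obtain ⟨g, hgT, hg1, hg2⟩ := hg
      rw [← proj_line g i hg1 u t hg2] at ht
      rw [← mem_cyl_proj hy i g v, mem_cyl hy]
      refine ⟨0, ?_⟩
      rw [zero_smul, add_zero]
      refine (hT _ _ fun f hf => ?_).1 ht
      exact huv (f.comp (proj g i)) (Finset.mem_union_right _
        (Finset.mem_image.2 ⟨(f, g), Finset.mem_product.2 ⟨hf, hgT⟩, rfl⟩))
    · push Not at hg
      obtain ⟨r, hr⟩ := exists_avoid T (fun f => f v) (fun f => f.linear (Finsupp.single i 1))
      rw [mem_cyl hy]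
      refine ⟨r, (hT _ _ fun f hf => ?_).1 ht⟩
      by_cases hl : f.linear (Finsupp.single i 1) = 0
      · rw [aff_add, aff_add, hl, mul_zero, mul_zero, add_zero, add_zero]
        exact huv f (Finset.mem_union_left _ (Finset.mem_filter.2 ⟨hf, hl⟩))
      · have h1 := hr f hf (Or.inr hl)
        rw [← aff_add] at h1
        exact iff_of_false (hg f hf hl) h1
  intro u v huv
  exact ⟨key u v huv, key v u fun f hf => (huv f hf).symm⟩

/-- permuting coordinates, as an affine map -/
noncomputable def perm (e : Equiv.Perm α) : (α →₀ F) →ᵃ[F] (α →₀ F) :=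
  (Finsupp.domLCongr (R := F) (M := F) e.symm).toLinearMap.toAffineMap

theorem perm_coe (e : Equiv.Perm α) (u : α →₀ F) : (perm e u : α → F) = u ∘ e := by
  ext j
  simp [perm, Finsupp.equivMapDomain_apply]

theorem mem_sub (y : Set (α → F)) (i j : α) (u : α →₀ F) :
    (u : α → F) ∈ sub i j y ↔ (perm (Equiv.swap i j) u : α → F) ∈ y := by
  rw [perm_coe]
  exact ⟨fun h => h.2, fun h => ⟨mem_W u, h⟩⟩

theorem con_comap {y z : Set (α → F)} (A : (α →₀ F) →ᵃ[F] (α →₀ F)) (h : Con y)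
    (hz : ∀ u : α →₀ F, (u : α → F) ∈ z ↔ (A u : α → F) ∈ y) : Con z := by
  obtain ⟨T, hT⟩ := h
  refine ⟨T.image fun f => f.comp A, fun u v huv => ?_⟩
  rw [hz, hz]
  exact hT _ _ fun f hf => huv (f.comp A) (Finset.mem_image_of_mem _ hf)

theorem con_zero {z : Set (α → F)} (f : Aff F α)
    (hz : ∀ u : α →₀ F, (u : α → F) ∈ z ↔ f u = 0) : Con z :=
  ⟨{f}, fun u v huv => by rw [hz, hz]; exact huv f (Finset.mem_singleton_self f)⟩

theorem SgMem.subW {S : Set (Set (α → F))} (hS : ∀ x ∈ S, x ⊆ W α F) {x : Set (α → F)}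
    (h : SgMem S x) : x ⊆ W α F := by
  induction h with
  | base h => exact hS _ h
  | empty => exact Set.empty_subset _
  | top => exact subset_rfl
  | dgnl i j => exact fun s hs => hs.1
  | union _ _ h1 h2 => exact Set.union_subset h1 h2
  | compl _ _ => exact Set.diff_subset
  | cylin i _ _ => exact fun s hs => hs.1
  | subst i j _ _ => exact fun s hs => hs.1

theorem mem_diag (i j : α) (u : α →₀ F) : (u : α → F) ∈ (diag i j : Set (α → F)) ↔
    ((Finsupp.lapply i - Finsupp.lapply j : (α →₀ F) →ₗ[F] F).toAffineMap : Aff F α) u = 0 := by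
  simp only [diag, Set.mem_setOf_eq, mem_W, true_and, LinearMap.coe_toAffineMap,
    LinearMap.sub_apply, Finsupp.lapply_apply, sub_eq_zero]

theorem con_union {x y : Set (α → F)} (hx : Con x) (hy : Con y) : Con (x ∪ y) := by
  obtain ⟨T, hT⟩ := hx
  obtain ⟨T', hT'⟩ := hy
  refine ⟨T ∪ T', fun u v huv => ?_⟩
  exact or_congr (hT u v fun f hf => huv f (Finset.mem_union_left _ hf))
    (hT' u v fun f hf => huv f (Finset.mem_union_right _ hf))

theorem con_compl {x : Set (α → F)} (hx : Con x) : Con (W α F \ x) := by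
  obtain ⟨T, hT⟩ := hx
  refine ⟨T, fun u v huv => ?_⟩
  simp only [Set.mem_diff, mem_W, true_and, hT u v huv]

theorem SgMem.con [CharZero F] {S : Set (Set (α → F))} (hS : ∀ x ∈ S, x ⊆ W α F)
    (hS' : ∀ x ∈ S, Con x) {x : Set (α → F)} (h : SgMem S x) : Con x := by
  induction h with
  | base h => exact hS' _ h
  | empty => exact ⟨∅, fun u v _ => by simp⟩
  | top => exact ⟨∅, fun u v _ => by simp [mem_W]⟩
  | dgnl i j => exact con_zero _ (mem_diag i j)
  | union _ _ h1 h2 => exact con_union h1 h2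
  | compl _ h => exact con_compl h
  | cylin i hx h => exact con_cyl (hx.subW hS) i h
  | subst i j _ h => exact con_comap _ h (mem_sub _ i j)

theorem ev_range {y : Set (α → F)} (h : Con y) (A B : (α →₀ F) →ᵃ[F] (α →₀ F))
    (hAB : ∀ u, ∃ v, A u = B v) (hBA : ∀ u, ∃ v, B u = A v) :
    Ev (fun u => (A u : α → F) ∈ y ↔ (B u : α → F) ∈ y) := by
  obtain ⟨T, hT⟩ := h
  refine ⟨(T.image fun f => f.comp A) ∪ (T.image fun f => f.comp B), fun u hu => ?_⟩
  refine hT _ _ fun f hf => ?_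
  have hA := hu (f.comp A) (Finset.mem_union_left _ (Finset.mem_image_of_mem _ hf))
  have hB := hu (f.comp B) (Finset.mem_union_right _ (Finset.mem_image_of_mem _ hf))
  have e1 : f.comp A = 0 → f.comp B = 0 := fun h0 => by
    ext v
    obtain ⟨w, hw⟩ := hBA v
    have := congrArg (fun g : Aff F α => g w) h0
    simpa [hw] using this
  have e2 : f.comp B = 0 → f.comp A = 0 := fun h0 => by
    ext v
    obtain ⟨w, hw⟩ := hAB v
    have := congrArg (fun g : Aff F α => g w) h0
    simpa [hw] using this
  by_cases h0 : f.comp A = 0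
  · have a := congrArg (fun g : Aff F α => g u) h0
    have b := congrArg (fun g : Aff F α => g u) (e1 h0)
    exact iff_of_true a b
  · exact iff_of_false (hA h0) (hB fun h => h0 (e2 h))

theorem ev_dich {y : Set (α → F)} (h : Con y) (A : (α →₀ F) →ᵃ[F] (α →₀ F)) :
    Ev (fun u => (A u : α → F) ∈ y) ∨ Ev (fun u => (A u : α → F) ∉ y) := by
  obtain ⟨T, hT⟩ := h
  have key : ∀ u v : α →₀ F, (∀ f ∈ T.image (fun f => f.comp A), f ≠ 0 → f u ≠ 0) →
      (∀ f ∈ T.image (fun f => f.comp A), f ≠ 0 → f v ≠ 0) →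
      ((A u : α → F) ∈ y ↔ (A v : α → F) ∈ y) := by
    intro u v hu hv
    refine hT _ _ fun f hf => ?_
    have hA := hu (f.comp A) (Finset.mem_image_of_mem _ hf)
    have hB := hv (f.comp A) (Finset.mem_image_of_mem _ hf)
    by_cases h0 : f.comp A = 0
    · have a := congrArg (fun g : Aff F α => g u) h0
      have b := congrArg (fun g : Aff F α => g v) h0
      exact iff_of_true a b
    · exact iff_of_false (hA h0) (hB h0)
  by_cases hc : ∃ u : α →₀ F, (∀ f ∈ T.image (fun f => f.comp A), f ≠ 0 → f u ≠ 0) ∧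
      (A u : α → F) ∈ y
  · obtain ⟨u, hu, huy⟩ := hc
    exact Or.inl ⟨_, fun v hv => (key u v hu hv).1 huy⟩
  · push Not at hc
    exact Or.inr ⟨_, fun v hv => hc v hv⟩

/-- the sum functional minus `c` -/
noncomputable def sm (α : Type*) (c : F) : Aff F α :=
  (Finsupp.linearCombination F (fun _ : α => (1 : F))).toAffineMap - AffineMap.const F _ c

theorem sm_apply (c : F) (u : α →₀ F) : sm α c u = (u.sum fun _ a => a) - c := by
  simp [sm, Finsupp.linearCombination_apply]

theorem sm_linear (c : F) (i : α) : (sm α c).linear (Finsupp.single i 1) = 1 := by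
  simp [sm, Finsupp.linearCombination_apply]

theorem mem_aElem (m : ℕ) (u : α →₀ F) :
    (u : α → F) ∈ (aElem F m : Set (α → F)) ↔ sm α (m : F) u = 0 := by
  have : (∑ᶠ i, (1 : F) * u i) = u.sum fun _ a => a := by
    rw [finsum_eq_sum_of_support_subset (s := u.support)]
    · simp [Finsupp.sum]
    · intro i hi
      simpa using hi
  simp only [aElem, poly, Set.mem_setOf_eq, mem_W, true_and, this, sm_apply, sub_eq_zero]
  exact eq_comm

theorem sm_perm (c : F) (e : Equiv.Perm α) (u : α →₀ F) : sm α c (perm e u) = sm α c u := by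
  rw [sm_apply, sm_apply]
  congr 1
  simp [perm, Finsupp.sum_equivMapDomain]

theorem perm_swap_swap (i j : α) (u : α →₀ F) :
    perm (Equiv.swap i j) (perm (Equiv.swap i j) u) = u := by
  apply DFunLike.coe_injective
  rw [perm_coe, perm_coe]
  ext k
  simp

/-- parametrisation of the classes -/
noncomputable def P (i : α) : Option ℕ → ((α →₀ F) →ᵃ[F] (α →₀ F))
  | none => AffineMap.id F _
  | some m => proj (sm α (m : F)) i

theorem P_range (i j : α) (k : Option ℕ) (u : α →₀ F) : P i k u = P j k (P i k u) := by
  cases k with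
  | none => rfl
  | some m =>
    refine (proj_of_zero _ _ _ ?_).symm
    exact f_proj _ _ (by rw [sm_linear]; exact one_ne_zero) _

theorem P_perm (i : α) (e : Equiv.Perm α) (k : Option ℕ) (u : α →₀ F) :
    perm e (P i k u) = P i k (perm e (P i k u)) := by
  cases k with
  | none => rfl
  | some m =>
    refine (proj_of_zero _ _ _ ?_).symm
    rw [sm_perm]
    exact f_proj _ _ (by rw [sm_linear]; exact one_ne_zero) _

theorem P_cyl {y : Set (α → F)} (hy : y ⊆ W α F) (i : α) (k : Option ℕ) (u : α →₀ F) :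
    (P i k u : α → F) ∈ cyl i y ↔ (u : α → F) ∈ cyl i y := by
  cases k with
  | none => exact Iff.rfl
  | some m => exact mem_cyl_proj hy i _ u

theorem SgMem.inv [CharZero F] [Infinite α] {S : Set (Set (α → F))} (hS : ∀ x ∈ S, x ⊆ W α F)
    (hS' : ∀ x ∈ S, Con x) (i0 : α) (k l : Option ℕ)
    (hS2 : ∀ x ∈ S, Ev (fun u => (P i0 k u : α → F) ∈ x ↔ (P i0 l u : α → F) ∈ x))
    {x : Set (α → F)} (h : SgMem S x) :
    Ev (fun u => (P i0 k u : α → F) ∈ x ↔ (P i0 l u : α → F) ∈ x) := by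
  have hsub : ∀ {x : Set (α → F)} (i j : α), Con x → ∀ k : Option ℕ,
      Ev (fun u => (P i0 k u : α → F) ∈ sub i j x ↔ (P i0 k u : α → F) ∈ x) := by
    intro x i j hx k
    refine (ev_range hx ((perm (Equiv.swap i j)).comp (P i0 k)) (P i0 k) ?_ ?_).mono ?_
    · exact fun u => ⟨_, P_perm i0 _ k u⟩
    · intro u
      refine ⟨perm (Equiv.swap i j) (P i0 k u), ?_⟩
      rw [AffineMap.comp_apply, ← P_perm, perm_swap_swap]
    · intro u hu
      rw [mem_sub]
      exact hu
  have hdiag : ∀ (i j w : α) (k : Option ℕ), i ≠ w → j ≠ w →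
      Ev (fun u => (P i0 k u : α → F) ∈ (diag i j : Set (α → F)) ↔
        (u : α → F) ∈ (diag i j : Set (α → F))) := by
    intro i j w k hi hj
    refine (ev_range (con_zero _ (mem_diag i j)) _ _ (fun u => ⟨_, P_range i0 w k u⟩)
      (fun u => ⟨_, P_range w i0 k u⟩)).mono fun u hu => ?_
    rw [hu]
    cases k with
    | none => exact Iff.rfl
    | some m =>
      rw [mem_diag, mem_diag]
      simp [P, proj_apply, hi, hj]
  induction h with
  | base h => exact hS2 _ h
  | empty => exact ⟨∅, fun u _ => by simp⟩
  | top => exact ⟨∅, fun u _ => by simp [mem_W]⟩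
  | dgnl i j =>
    obtain ⟨w, hw⟩ := Infinite.exists_notMem_finset ({i, j} : Finset α)
    simp only [Finset.mem_insert, Finset.mem_singleton, not_or] at hw
    refine ((hdiag i j w k (Ne.symm hw.1) (Ne.symm hw.2)).and
      (hdiag i j w l (Ne.symm hw.1) (Ne.symm hw.2))).mono fun u hu => ?_
    rw [hu.1, hu.2]
  | union _ _ h1 h2 => exact (h1.and h2).mono fun u hu => or_congr hu.1 hu.2
  | compl _ h =>
    refine h.mono fun u hu => ?_
    simp only [Set.mem_diff, mem_W, true_and, hu]
  | @cylin i x hx h =>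
    have hW := hx.subW hS
    have hc := con_cyl hW i (hx.con hS hS')
    have a := ev_range hc (P i0 k) (P i k) (fun u => ⟨_, P_range i0 i k u⟩)
      (fun u => ⟨_, P_range i i0 k u⟩)
    have b := ev_range hc (P i0 l) (P i l) (fun u => ⟨_, P_range i0 i l u⟩)
      (fun u => ⟨_, P_range i i0 l u⟩)
    refine (a.and b).mono fun u hu => ?_
    rw [hu.1, hu.2, P_cyl hW, P_cyl hW]
  | @subst i j x hx h =>
    have hc := hx.con hS hS'
    refine ((hsub i j hc k).and ((hsub i j hc l).and h)).mono fun u hu => ?_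
    rw [hu.1, hu.2.1, hu.2.2]

end Helpers

end QPEAF

/-- Let `F` be a field of characteristic 0 and `α` infinite.  With `ℚ`
replaced by `F` throughout the construction, for every natural number `n` the
subalgebra `A_n` of `C` generated by `{a_i : i < 2^n}` (where `a_m = [m·1_F, 1]`)
cannot be generated by `n` elements: for every subset `X` of `A_n` with `|X| ≤ n`,
the subalgebra of `C` generated by `X` is not `A_n`. -/
theorem stmt18 {F : Type*} [Field F] [CharZero F] {α : Type*} [Infinite α] (n : ℕ)
    (X : Set (Set (α → F)))
    (hX : X ⊆ Sg {x : Set (α → F) | ∃ i : ℕ, i < 2 ^ n ∧ x = aElem F i})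
    (hfin : X.Finite) (hcard : X.ncard ≤ n) :
    Sg X ≠ Sg {x : Set (α → F) | ∃ i : ℕ, i < 2 ^ n ∧ x = aElem F i} := by
  intro heq
  have hSW : ∀ x ∈ {x : Set (α → F) | ∃ i : ℕ, i < 2 ^ n ∧ x = aElem F i}, x ⊆ W α F := by
    rintro x ⟨i, -, rfl⟩ s hs
    exact hs.1
  have hSC : ∀ x ∈ {x : Set (α → F) | ∃ i : ℕ, i < 2 ^ n ∧ x = aElem F i}, Con x := by
    rintro x ⟨i, -, rfl⟩
    exact con_zero _ (mem_aElem i)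
  have hXW : ∀ x ∈ X, x ⊆ W α F := fun x hx => SgMem.subW hSW (hX hx)
  have hXC : ∀ x ∈ X, Con x := fun x hx => SgMem.con hSW hSC (hX hx)
  obtain ⟨i0⟩ : Nonempty α := inferInstance
  haveI : Fintype X := hfin.fintype
  let c : Option (Fin (2 ^ n)) → Option ℕ := fun k => k.map Fin.val
  let g : Option (Fin (2 ^ n)) → Set X :=
    fun k => {x | Ev (fun u : α →₀ F => (P i0 (c k) u : α → F) ∈ (x : Set (α → F)))}
  have hlt : Fintype.card (Set X) < Fintype.card (Option (Fin (2 ^ n))) := by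
    rw [Fintype.card_set, Fintype.card_option, Fintype.card_fin]
    have : Fintype.card X ≤ n := by
      rw [← Nat.card_eq_fintype_card]
      exact hcard
    exact Nat.lt_succ_of_le (Nat.pow_le_pow_right (by norm_num) this)
  obtain ⟨k, l, hkl, hg⟩ := Fintype.exists_ne_map_eq_of_card_lt g hlt
  have hinv : ∀ x ∈ X, Ev (fun u : α →₀ F => (P i0 (c k) u : α → F) ∈ x ↔
      (P i0 (c l) u : α → F) ∈ x) := by
    intro x hx
    have hiff : Ev (fun u : α →₀ F => (P i0 (c k) u : α → F) ∈ x) ↔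
        Ev (fun u : α →₀ F => (P i0 (c l) u : α → F) ∈ x) := by
      have := Set.ext_iff.1 hg ⟨x, hx⟩
      exact this
    rcases ev_dich (hXC x hx) (P i0 (c k)) with h1 | h1
    · exact (h1.and (hiff.1 h1)).mono fun u hu => iff_of_true hu.1 hu.2
    · rcases ev_dich (hXC x hx) (P i0 (c l)) with h2 | h2
      · obtain ⟨u, hu⟩ := (h1.and (hiff.2 h2)).exists
        exact absurd hu.2 hu.1
      · exact (h1.and h2).mono fun u hu => iff_of_false hu.1 hu.2
  have hone : ∀ m : ℕ, (sm α (m : F)).linear (Finsupp.single i0 1) ≠ 0 := fun m => by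
    rw [sm_linear]; exact one_ne_zero
  have hfinal : ∀ (m : Fin (2 ^ n)) (l : Option (Fin (2 ^ n))), some m ≠ l →
      Ev (fun u : α →₀ F => (P i0 (c (some m)) u : α → F) ∈ (aElem F (m : ℕ) : Set (α → F)) ↔
      (P i0 (c l) u : α → F) ∈ (aElem F (m : ℕ) : Set (α → F))) → False := by
    intro m l hne hev
    have hin : ∀ u : α →₀ F,
        (P i0 (c (some m)) u : α → F) ∈ (aElem F (m : ℕ) : Set (α → F)) := by
      intro u
      rw [mem_aElem]
      exact f_proj _ _ (hone _) u
    have hout : Ev (fun u : α →₀ F =>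
        (P i0 (c l) u : α → F) ∉ (aElem F (m : ℕ) : Set (α → F))) := by
      cases l with
      | none =>
        refine ⟨{sm α ((m : ℕ) : F)}, fun u hu => ?_⟩
        beta_reduce
        rw [mem_aElem]
        refine hu _ (Finset.mem_singleton_self _) fun h0 => hone m ?_
        rw [h0]; rfl
      | some l =>
        refine ⟨∅, fun u _ => ?_⟩
        beta_reduce
        rw [mem_aElem]
        intro h
        have h' : sm α ((l : ℕ) : F) (P i0 (c (some l)) u) = 0 := f_proj _ _ (hone _) u
        rw [sm_apply] at h h'
        have : ((m : ℕ) : F) = ((l : ℕ) : F) := by linear_combination h' - h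
        exact hne (congrArg some (Fin.ext (Nat.cast_injective this)))
    obtain ⟨u, hu⟩ := (hev.and hout).exists
    exact hu.2 (hu.1.1 (hin u))
  have hall : ∀ m : Fin (2 ^ n), Ev (fun u : α →₀ F =>
      (P i0 (c k) u : α → F) ∈ (aElem F (m : ℕ) : Set (α → F)) ↔
      (P i0 (c l) u : α → F) ∈ (aElem F (m : ℕ) : Set (α → F))) := by
    intro m
    have hm : (aElem F (m : ℕ) : Set (α → F)) ∈ Sg X := by
      rw [heq]
      exact SgMem.base ⟨m, m.2, rfl⟩
    exact SgMem.inv hXW hXC i0 (c k) (c l) hinv hm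
  cases k with
  | some m => exact hfinal m l hkl (hall m)
  | none =>
    cases l with
    | none => exact hkl rfl
    | some m => exact hfinal m none (by simp) ((hall m).mono fun u hu => hu.symm)
end
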